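/- Fix a prime power q and ε ∈ (0,1/2). There exist constants c, C > 0 (depending only on q and ε) such that for every δ > 0 there is an integer N with the following property: for all integers n ≥ N and all integers m with (1+ε)·(log n)/(log q) ≤ m ≤ (2−ε)·(log n)/(log q), one has (1−δ)·G_q(x_q)·exp( c·n³/(m·q^{2m}) ) ≤ p_{n,m,q}/p_{n,m} ≤ (1+δ)·G_q(x_q)·exp( C·n³/(m·q^{2m}) ). -/

import Mathlib

open Real

noncomputable section

/-- Predicate characterizing the Dickman function `ρ : [0,∞) → (0,∞)`:
continuous on `[0,∞)`, positive, equal to `1` on `[0,1]`, and satisfying the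
delay differential equation `t·ρ'(t) + ρ(t-1) = 0` for `t > 1`. -/
def IsDickman (ρ : ℝ → ℝ) : Prop :=
  ContinuousOn ρ (Set.Ici 0) ∧
  (∀ t : ℝ, 0 ≤ t → 0 < ρ t) ∧
  (∀ t ∈ Set.Icc (0:ℝ) 1, ρ t = 1) ∧
  (∀ t : ℝ, 1 < t → HasDerivAt ρ (-(ρ (t - 1)) / t) t)

/-- `ξ(u)`: for `u > 1`, the unique positive solution of `e^ξ = 1 + u·ξ`; otherwise `0`. -/
def xi (u : ℝ) : ℝ :=
  open Classical in
  if h : ∃ x : ℝ, 0 < x ∧ Real.exp x = 1 + u * x then h.choose else 0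

/-- `p_{n,m}`: probability that a uniformly random permutation of `{1,…,n}` is `m`-friable,
i.e. has no cycle of length greater than `m`. -/
def permProb (n m : ℕ) : ℝ :=
  (Nat.card {σ : Equiv.Perm (Fin n) // ∀ c ∈ σ.cycleType, c ≤ m} : ℝ) /
    (Nat.factorial n : ℝ)

/-- `p_{n,m,q}`: proportion of monic polynomials of degree `n` over a finite field `F`
(of cardinality `q`) that are `m`-friable, i.e. all of whose monic irreducible factors
have degree at most `m`. -/
def polyProb (F : Type) [Field F] [Fintype F] (n m : ℕ) : ℝ :=
  (Nat.card {f : Polynomial F // f.Monic ∧ f.natDegree = n ∧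
      ∀ p : Polynomial F, p.Monic → Irreducible p → p ∣ f → p.natDegree ≤ m} : ℝ) /
    (Fintype.card F : ℝ) ^ n

/-- `F_q(z) = ∏_{deg P ≤ m} (1 - (z/q)^{deg P})⁻¹`, the product over monic irreducible
polynomials `P` over `F` of degree at most `m`. -/
def FqFun (F : Type) [Field F] [Fintype F] (m : ℕ) (z : ℝ) : ℝ :=
  ∏ᶠ p ∈ {p : Polynomial F | p.Monic ∧ Irreducible p ∧ p.natDegree ≤ m},
    (1 - (z / (Fintype.card F : ℝ)) ^ p.natDegree)⁻¹

/-- `G_q(z) = F_q(z) · exp(-∑_{i=1}^m z^i/i)`. -/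
def Gq (F : Type) [Field F] [Fintype F] (m : ℕ) (z : ℝ) : ℝ :=
  FqFun F m z * Real.exp (-(∑ i ∈ Finset.Icc 1 m, z ^ i / (i : ℝ)))

/-- The coefficients `d_{m,i}`. -/
def dcoef (m i : ℕ) : ℝ :=
  if i = m then -(1 / (m : ℝ)) * ∑ j ∈ Finset.Icc 2 m, (1 : ℝ) / (j : ℝ)
  else Real.Gamma ((i : ℝ) + (i : ℝ) / (m : ℝ)) /
    (((m : ℝ) - (i : ℝ)) * (Nat.factorial i : ℝ) * Real.Gamma (1 + (i : ℝ) / (m : ℝ)))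

/-- `T(s) = ∫₀^s ((e^t - 1)/t)·((t/m)/(1 - e^{-t/m}) - 1) dt`, integrand extended by `0` at `t = 0`. -/
def Tfun (m : ℕ) (s : ℝ) : ℝ :=
  ∫ t in (0:ℝ)..s,
    if t = 0 then 0 else
      ((Real.exp t - 1) / t) * ((t / (m : ℝ)) / (1 - Real.exp (-t / (m : ℝ))) - 1)

end

/-!
Both `n ↦ p_{n,m}` and `n ↦ p_{n,m,q}` are the Taylor coefficients of the exponential of a power
series `∑ a_j z ^ j / j` with nonnegative `a_j`, so Cauchy's formula on the circle through the
saddle point writes each of them as a prefactor times an integral `∫ exp (centredExponent w θ)`,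
where `w` is a family of nonnegative weights of total mass `n`. For permutations `a_j = 1` for
`j ≤ m`; for polynomials `a_j` has in addition a tail `j > m`, of size about `q ^ (-m)` around
`j = 2 * m` and geometrically small beyond it. In the range `(1 + ε) log_q n ≤ m ≤ (2 - ε) log_q n`
the tail changes the exponent negligibly on a short arc around `θ = 0`, outside of which both
integrands are negligible, so that the two integrals are asymptotically equal.

What survives is the quotient of the prefactors, taken at the saddle points `x` of the permutations
and `y` of the polynomials. It equals `G_q y * exp (saddleDefect m x y)`, and the defect, which
vanishes to second order at `x = y`, is comparable to `(∑_{j > m} a_j y ^ j) ^ 2 / (m * n)`, hence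
to `n ^ 3 / (m * q ^ (2 * m))`.
-/

open Filter MeasureTheory Topology

section ExpCoeff

/-- `IsExpCoeff a p` says that `p n` is the coefficient of `z ^ n` in the power series
`exp (∑_{j ≥ 1} a j * z ^ j / j)`. It is encoded by the recursion that comes from the logarithmic
derivative, so that no formal exponential is needed; the value `a 0` is irrelevant. -/
structure IsExpCoeff (a p : ℕ → ℝ) : Prop where
  zero : p 0 = 1
  succ (n : ℕ) : ((n : ℝ) + 1) * p (n + 1) = ∑ k ∈ Finset.range (n + 1), a (k + 1) * p (n - k)

/-- The truncation `exp (∑_{1 ≤ j ≤ N} a j * z ^ j / j)` of the generating function with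
coefficients `p`, where `IsExpCoeff a p`; unlike the full series it is entire. -/
noncomputable def truncExp (a : ℕ → ℝ) (N : ℕ) (z : ℂ) : ℂ :=
  Complex.exp (∑ k ∈ Finset.range N, (a (k + 1) : ℂ) / ((k : ℂ) + 1) * z ^ (k + 1))

lemma differentiable_truncExp (a : ℕ → ℝ) (N : ℕ) : Differentiable ℂ (truncExp a N) := by
  unfold truncExp
  fun_prop

lemma deriv_truncExp (a : ℕ → ℝ) (N : ℕ) :
    deriv (truncExp a N) =
      (fun z ↦ ∑ k ∈ Finset.range N, (a (k + 1) : ℂ) * z ^ k) * truncExp a N := by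
  funext z
  have hsum : HasDerivAt
      (fun z : ℂ ↦ ∑ k ∈ Finset.range N, (a (k + 1) : ℂ) / ((k : ℂ) + 1) * z ^ (k + 1))
      (∑ k ∈ Finset.range N, (a (k + 1) : ℂ) * z ^ k) z := by
    refine HasDerivAt.fun_sum fun k _ ↦ ?_
    have hk : (k : ℂ) + 1 ≠ 0 := Nat.cast_add_one_ne_zero k
    refine ((hasDerivAt_pow (k + 1) z).const_mul _).congr_deriv ?_
    push_cast
    field_simp
  exact hsum.cexp.deriv.trans (mul_comm _ _)

lemma iteratedDeriv_sum_mul_pow_zero (c : ℕ → ℂ) {k N : ℕ} (hk : k < N) :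
    iteratedDeriv k (fun z : ℂ ↦ ∑ i ∈ Finset.range N, c i * z ^ i) 0 = k.factorial * c k := by
  have hterm (i : ℕ) : iteratedDeriv k (fun z : ℂ ↦ c i * z ^ i) 0 =
      if k = i then (k.factorial : ℂ) * c k else 0 := by
    rw [iteratedDeriv_const_mul_field, iteratedDeriv_fun_pow_zero]
    split_ifs <;> simp_all [mul_comm]
  rw [iteratedDeriv_fun_sum fun i _ ↦ by fun_prop, Finset.sum_congr rfl fun i _ ↦ hterm i]
  simp [hk]

lemma IsExpCoeff.iteratedDeriv_truncExp {a p : ℕ → ℝ} (h : IsExpCoeff a p) {n N : ℕ}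
    (hn : n ≤ N) : iteratedDeriv n (truncExp a N) 0 = n.factorial * p n := by
  induction n using Nat.strong_induction_on with
  | _ n ih =>
    rcases n with _ | n
    · simp [h.zero, truncExp]
    have hterm (k : ℕ) (hk : k ∈ Finset.range (n + 1)) :
        (n.choose k : ℂ) *
            iteratedDeriv k (fun z ↦ ∑ i ∈ Finset.range N, (a (i + 1) : ℂ) * z ^ i) 0 *
            iteratedDeriv (n - k) (truncExp a N) 0 =
          n.factorial * ((a (k + 1) * p (n - k) : ℝ) : ℂ) := by
      have hkn : k ≤ n := Nat.lt_succ_iff.1 (Finset.mem_range.1 hk)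
      rw [iteratedDeriv_sum_mul_pow_zero (fun i ↦ (a (i + 1) : ℂ)) (by lia),
        ih (n - k) (by lia) (by lia), ← Nat.choose_mul_factorial_mul_factorial hkn]
      push_cast
      ring
    rw [iteratedDeriv_succ', deriv_truncExp,
      iteratedDeriv_mul (ContDiff.contDiffAt (by fun_prop))
        (differentiable_truncExp a N).contDiff.contDiffAt,
      Finset.sum_congr rfl hterm, ← Finset.mul_sum, ← Complex.ofReal_sum, ← h.succ n,
      Nat.factorial_succ]
    push_cast
    ring

lemma integral_mul_exp_neg_eq_iteratedDeriv {f : ℂ → ℂ} (hf : Differentiable ℂ f) {x : ℝ}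
    (hx : 0 < x) (n : ℕ) :
    ∫ θ in (-π)..π, f (circleMap 0 x θ) * Complex.exp (-(n * θ * Complex.I)) =
      2 * π * x ^ n / n.factorial * iteratedDeriv n f 0 := by
  have hx0 : (x : ℂ) ≠ 0 := Complex.ofReal_ne_zero.2 hx.ne'
  have hexp (θ : ℝ) : Complex.exp (-(n * θ * Complex.I)) = x ^ n * (circleMap 0 x θ ^ n)⁻¹ := by
    rw [circleMap_zero, mul_pow, ← Complex.exp_nat_mul, Complex.exp_neg, mul_assoc (n : ℂ)]
    field_simp
  have hperiodic : Function.Periodic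
      (fun θ ↦ f (circleMap 0 x θ) * Complex.exp (-(n * θ * Complex.I))) (2 * π) := fun θ ↦ by
    simp only [hexp, periodic_circleMap 0 x θ]
  have hshift := hperiodic.intervalIntegral_add_eq (-π) 0
  rw [show -π + 2 * π = π by ring, zero_add] at hshift
  have hcauchy := hf.differentiableOn (s := Metric.closedBall 0 x)
    |>.circleIntegral_one_div_sub_center_pow_smul hx n
  have hintegrand (θ : ℝ) : deriv (circleMap 0 x) θ •
        ((1 / (circleMap 0 x θ - 0) ^ (n + 1)) • f (circleMap 0 x θ)) =
      Complex.I * ((x : ℂ) ^ n)⁻¹ *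
        (f (circleMap 0 x θ) * Complex.exp (-(n * θ * Complex.I))) := by
    have hne : circleMap 0 x θ ≠ 0 := circleMap_ne_center hx.ne'
    rw [hexp, deriv_circleMap]
    simp only [smul_eq_mul, sub_zero]
    field_simp
    ring
  rw [circleIntegral] at hcauchy
  simp_rw [hintegrand] at hcauchy
  rw [intervalIntegral.integral_const_mul, ← hshift, smul_eq_mul] at hcauchy
  field_simp [Complex.I_ne_zero] at hcauchy ⊢
  linear_combination hcauchy

/-- The `j`-th term of `centredExponent b θ`. -/
noncomputable def centredTerm (b : ℕ → ℝ) (θ : ℝ) (j : ℕ) : ℂ :=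
  ((b j / j : ℝ) : ℂ) * (Complex.exp ((j * θ : ℝ) * Complex.I) - 1 - (j * θ : ℝ) * Complex.I)

/-- The exponent `∑ j, b j / j * (exp (i j θ) - 1 - i j θ)`, where `b j = a j * x ^ j`: what is left
of `∑ j, a j * z ^ j / j` on the circle of radius `x` when the value and the derivative at `θ = 0`
are removed. -/
noncomputable def centredExponent (b : ℕ → ℝ) (θ : ℝ) : ℂ :=
  ∑' j : ℕ, centredTerm b θ j

lemma summable_div_natCast {b : ℕ → ℝ} (hb : Summable b) :
    Summable fun j : ℕ ↦ b j / j := by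
  refine .of_norm_bounded hb.norm fun j ↦ ?_
  rw [norm_div, RCLike.norm_natCast]
  rcases j.eq_zero_or_pos with rfl | hj
  · simp
  · exact div_le_self (norm_nonneg _) (mod_cast hj)

/-- The `j`-th term of `∑ j, a j * z ^ j / j` at `z = x * exp (i θ)`, where `b j = a j * x ^ j`. -/
noncomputable def circleTerm (b : ℕ → ℝ) (j : ℕ) (θ : ℝ) : ℂ :=
  ((b j / j : ℝ) : ℂ) * Complex.exp ((j * θ : ℝ) * Complex.I)

lemma norm_circleTerm (b : ℕ → ℝ) (j : ℕ) (θ : ℝ) : ‖circleTerm b j θ‖ = ‖b j / j‖ := by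
  rw [circleTerm, norm_mul, Complex.norm_exp_ofReal_mul_I, mul_one, Complex.norm_real]

lemma summable_circleTerm {b : ℕ → ℝ} (hb : Summable b) (θ : ℝ) :
    Summable fun j ↦ circleTerm b j θ :=
  .of_norm <| by simpa only [norm_circleTerm] using (summable_div_natCast hb).norm

lemma truncExp_circleMap (a : ℕ → ℝ) (N : ℕ) (x θ : ℝ) :
    truncExp a N (circleMap 0 x θ) =
      Complex.exp (∑ j ∈ Finset.range (N + 1), circleTerm (fun j ↦ a j * x ^ j) j θ) := by
  rw [truncExp, Finset.sum_range_succ', circleTerm, Nat.cast_zero, div_zero, Complex.ofReal_zero,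
    zero_mul, add_zero]
  congr 1
  refine Finset.sum_congr rfl fun k _ ↦ ?_
  rw [circleTerm, circleMap_zero, mul_pow, ← Complex.exp_nat_mul]
  push_cast
  ring_nf

lemma tendsto_integral_exp_sum_circleTerm {b : ℕ → ℝ} (hb : Summable b) (n : ℕ) :
    Tendsto (fun N : ℕ ↦ ∫ θ in (-π)..π, Complex.exp (∑ j ∈ Finset.range (N + 1),
        circleTerm b j θ) * Complex.exp (-(n * θ * Complex.I))) atTop
      (𝓝 (∫ θ in (-π)..π,
        Complex.exp (∑' j, circleTerm b j θ) * Complex.exp (-(n * θ * Complex.I)))) := by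
  have hnorm := (summable_div_natCast hb).norm
  refine intervalIntegral.tendsto_integral_filter_of_dominated_convergence
    (fun _ ↦ Real.exp (∑' j : ℕ, ‖b j / j‖)) (.of_forall fun N ↦ ?_)
    (.of_forall fun N ↦ .of_forall fun θ _ ↦ ?_) (by simp) (.of_forall fun θ _ ↦ ?_)
  · refine Continuous.aestronglyMeasurable ?_
    simp only [circleTerm]
    fun_prop
  · have hphase : -(n * θ * Complex.I) = ((-(n * θ) : ℝ) : ℂ) * Complex.I := by
      push_cast
      ring
    rw [norm_mul, hphase, Complex.norm_exp_ofReal_mul_I, mul_one]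
    refine (Complex.norm_exp_le_exp_norm _).trans (Real.exp_le_exp.2 ((norm_sum_le _ _).trans ?_))
    simp_rw [norm_circleTerm]
    exact hnorm.sum_le_tsum _ fun j _ ↦ norm_nonneg _
  · exact ((Complex.continuous_exp.tendsto _).comp <|
      (summable_circleTerm hb θ).hasSum.tendsto_sum_nat.comp (tendsto_add_atTop_nat 1)).mul_const _

lemma norm_centredTerm_le (b : ℕ → ℝ) (θ : ℝ) (j : ℕ) :
    ‖centredTerm b θ j‖ ≤ 2 * |θ| * |b j| := by
  have hexp (u : ℝ) : ‖Complex.exp (u * Complex.I) - 1 - u * Complex.I‖ ≤ 2 * |u| := by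
    have hchord := Real.norm_exp_I_mul_ofReal_sub_one_le (x := u)
    rw [mul_comm, Real.norm_eq_abs] at hchord
    refine (norm_sub_le _ _).trans ?_
    rw [norm_mul, Complex.norm_I, mul_one, Complex.norm_real, Real.norm_eq_abs]
    linarith
  rw [centredTerm, norm_mul, Complex.norm_real, Real.norm_eq_abs]
  calc |b j / j| * _ ≤ |b j / j| * (2 * |j * θ|) := by gcongr; exact hexp _
    _ = 2 * |θ| * (|b j| * (j / j)) := by rw [abs_div, abs_mul, Nat.abs_cast]; ring
    _ ≤ 2 * |θ| * |b j| := by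
      gcongr
      exact mul_le_of_le_one_right (abs_nonneg _) (div_self_le_one _)

lemma hasSum_centredTerm {b : ℕ → ℝ} (hb : Summable b) (θ : ℝ) :
    HasSum (centredTerm b θ) (centredExponent b θ) :=
  (Summable.of_norm_bounded (hb.abs.mul_left (2 * |θ|)) (norm_centredTerm_le b θ)).hasSum

lemma tsum_circleTerm_eq {b : ℕ → ℝ} {n : ℝ} (hb : HasSum b n) (hb0 : b 0 = 0) (θ : ℝ) :
    ∑' j, circleTerm b j θ =
      ((∑' j : ℕ, b j / j : ℝ) : ℂ) + centredExponent b θ + n * θ * Complex.I := by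
  have hconst := Complex.hasSum_ofReal.2 (summable_div_natCast hb.summable).hasSum
  have hlin := (Complex.hasSum_ofReal.2 hb).mul_right (θ * Complex.I : ℂ)
  rw [mul_assoc, ← ((hconst.add (hasSum_centredTerm hb.summable θ)).add hlin).tsum_eq]
  refine tsum_congr fun j ↦ ?_
  rcases j.eq_zero_or_pos with rfl | hj
  · simp [circleTerm, centredTerm, hb0]
  · have hj0 : (j : ℂ) ≠ 0 := Nat.cast_ne_zero.2 hj.ne'
    rw [circleTerm, centredTerm]
    push_cast
    field_simp
    ring

theorem IsExpCoeff.two_pi_mul_mul_pow_eq {a p : ℕ → ℝ} (h : IsExpCoeff a p) (ha : a 0 = 0)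
    {n : ℕ} {x : ℝ} (hx : 0 < x) (hn : HasSum (fun j ↦ a j * x ^ j) n) :
    ((2 * π * p n * x ^ n : ℝ) : ℂ) = (Real.exp (∑' j : ℕ, a j * x ^ j / j) : ℝ) *
      ∫ θ in (-π)..π, Complex.exp (centredExponent (fun j ↦ a j * x ^ j) θ) := by
  have htrunc : ∀ᶠ N in atTop, ((2 * π * p n * x ^ n : ℝ) : ℂ) =
      ∫ θ in (-π)..π, Complex.exp (∑ j ∈ Finset.range (N + 1),
        circleTerm (fun j ↦ a j * x ^ j) j θ) * Complex.exp (-(n * θ * Complex.I)) := by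
    filter_upwards [eventually_ge_atTop n] with N hN
    have hfac : (n.factorial : ℂ) ≠ 0 := Nat.cast_ne_zero.2 n.factorial_ne_zero
    simp_rw [← truncExp_circleMap]
    rw [integral_mul_exp_neg_eq_iteratedDeriv (differentiable_truncExp a N) hx,
      h.iteratedDeriv_truncExp hN]
    push_cast
    field_simp
  rw [tendsto_nhds_unique (tendsto_const_nhds.congr' htrunc)
    (tendsto_integral_exp_sum_circleTerm hn.summable n), ← intervalIntegral.integral_const_mul]
  refine intervalIntegral.integral_congr fun θ _ ↦ ?_
  rw [Complex.ofReal_exp, ← Complex.exp_add, ← Complex.exp_add,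
    tsum_circleTerm_eq hn (by simp [ha])]
  congr 1
  push_cast
  ring

end ExpCoeff

section CentredExponent

variable {b b' : ℕ → ℝ}

lemma norm_exp_mul_I_sub_one_sub_le (u : ℝ) :
    ‖Complex.exp (u * Complex.I) - 1 - u * Complex.I‖ ≤ 2 * u ^ 2 := by
  have hnorm : ‖(u : ℂ) * Complex.I‖ = |u| := by simp
  rcases le_or_gt |u| 1 with hu | hu
  · have htaylor := Complex.norm_exp_sub_one_sub_id_le (hnorm.trans_le hu)
    rw [hnorm, sq_abs] at htaylor
    linarith [sq_nonneg u]
  · have hchord := Real.norm_exp_I_mul_ofReal_sub_one_le (x := u)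
    rw [mul_comm, Real.norm_eq_abs] at hchord
    have htriangle := norm_sub_le (Complex.exp (u * Complex.I) - 1) (u * Complex.I)
    nlinarith [sq_abs u]

lemma abs_sin_sub_self_le (u : ℝ) : |Real.sin u - u| ≤ |u| ^ 3 := by
  wlog hu : 0 ≤ u generalizing u
  · have hneg := this (-u) (by linarith)
    rwa [Real.sin_neg, abs_neg, neg_sub_neg, abs_sub_comm] at hneg
  rw [abs_of_nonneg hu, abs_le]
  have hcube : 0 ≤ u ^ 3 := by positivity
  constructor <;> linarith [Real.sin_ge_sub_cube hu, Real.sin_le hu]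

lemma one_sub_cos_sub_le (α β : ℝ) :
    1 - Real.cos (α - β) ≤ 2 * (1 - Real.cos α) + 2 * (1 - Real.cos β) := by
  rw [Real.cos_sub]
  nlinarith [Real.sin_sq_add_cos_sq α, Real.sin_sq_add_cos_sq β,
    sq_nonneg (Real.sin α + Real.sin β), sq_nonneg (Real.cos α + Real.cos β - 2)]

lemma hasSum_re_centredExponent (hb : Summable b) (θ : ℝ) :
    HasSum (fun j : ℕ ↦ -(b j / j * (1 - Real.cos (j * θ)))) (centredExponent b θ).re := by
  convert Complex.hasSum_re (hasSum_centredTerm hb θ) using 2 with j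
  rw [centredTerm, Complex.re_ofReal_mul, Complex.sub_re, Complex.sub_re,
    Complex.exp_ofReal_mul_I_re, Complex.one_re, Complex.re_ofReal_mul, Complex.I_re]
  ring

lemma hasSum_im_centredExponent (hb : Summable b) (θ : ℝ) :
    HasSum (fun j : ℕ ↦ b j / j * (Real.sin (j * θ) - j * θ)) (centredExponent b θ).im := by
  convert Complex.hasSum_im (hasSum_centredTerm hb θ) using 2 with j
  rw [centredTerm, Complex.im_ofReal_mul, Complex.sub_im, Complex.sub_im,
    Complex.exp_ofReal_mul_I_im, Complex.one_im, Complex.im_ofReal_mul, Complex.I_im]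
  ring

lemma continuousOn_centredExponent (hb : Summable b) (R : ℝ) :
    ContinuousOn (centredExponent b) (Set.Icc (-R) R) := by
  refine continuousOn_tsum (fun j ↦ ?_) (hb.abs.mul_left (2 * R)) fun j θ hθ ↦
    (norm_centredTerm_le b θ j).trans ?_
  · unfold centredTerm
    fun_prop
  · gcongr
    exact abs_le.2 hθ

-- Since `m` and `m - 1` are consecutive, `m * θ` and `(m - 1) * θ` cannot both be near `2πℤ`
-- unless `θ` is.
lemma re_centredExponent_le (hb : Summable b) (hb0 : ∀ j, 0 ≤ b j) {m : ℕ} (hm : 2 ≤ m) {K : ℝ}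
    (hK : 0 ≤ K) (hKm : K ≤ b m) (hKm' : K ≤ b (m - 1)) {θ : ℝ} (hθ : |θ| ≤ π) :
    (centredExponent b θ).re ≤ -(K / m * (θ ^ 2 / π ^ 2)) := by
  have hcos (j : ℕ) : 0 ≤ 1 - Real.cos (j * θ) := sub_nonneg.2 (Real.cos_le_one _)
  have hnonneg (j : ℕ) : 0 ≤ b j / j * (1 - Real.cos (j * θ)) :=
    mul_nonneg (div_nonneg (hb0 j) j.cast_nonneg) (hcos j)
  have hsum := (hasSum_re_centredExponent hb θ).neg
  simp only [neg_neg] at hsum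
  have htwo := sum_le_hasSum {m, m - 1} (fun j _ ↦ hnonneg j) hsum
  rw [Finset.sum_pair (by lia)] at htwo
  have hcast : ((m - 1 : ℕ) : ℝ) = m - 1 := Nat.cast_pred (by lia)
  have hm' : (0 : ℝ) < m - 1 := by
    rw [← hcast]
    exact_mod_cast (by lia : 0 < m - 1)
  have hcoef : K / m ≤ b (m - 1) / (m - 1 : ℕ) := by
    rw [hcast]
    exact div_le_div₀ (hb0 _) hKm' hm' (by linarith)
  have hangle := one_sub_cos_sub_le (m * θ) ((m - 1 : ℕ) * θ)
  rw [← sub_mul, hcast, sub_sub_cancel, one_mul, ← hcast] at hangle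
  have hquad : θ ^ 2 / π ^ 2 ≤
      (1 - Real.cos (m * θ)) + (1 - Real.cos ((m - 1 : ℕ) * θ)) := by
    have := Real.cos_le_one_sub_mul_cos_sq hθ
    rw [div_mul_eq_mul_div, mul_div_assoc] at this
    linarith
  rw [le_neg]
  calc K / m * (θ ^ 2 / π ^ 2)
      ≤ K / m * ((1 - Real.cos (m * θ)) + (1 - Real.cos ((m - 1 : ℕ) * θ))) := by gcongr
    _ ≤ b m / m * (1 - Real.cos (m * θ)) +
        b (m - 1) / (m - 1 : ℕ) * (1 - Real.cos ((m - 1 : ℕ) * θ)) := by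
      rw [mul_add]
      gcongr
      · exact hcos m
      · exact hcos (m - 1)
    _ ≤ _ := htwo

lemma le_re_centredExponent (hb : Summable b) (hb0 : ∀ j, 0 ≤ b j) {V : ℝ}
    (hV : HasSum (fun j : ℕ ↦ j * b j) V) (θ : ℝ) :
    -(V * θ ^ 2 / 2) ≤ (centredExponent b θ).re := by
  rw [mul_div_assoc, mul_comm]
  refine hasSum_le (fun j ↦ neg_le_neg ?_) (hV.mul_left (θ ^ 2 / 2)).neg
    (hasSum_re_centredExponent hb θ)
  have hcos : 1 - Real.cos (j * θ) ≤ (j * θ) ^ 2 / 2 :=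
    sub_le_comm.1 Real.one_sub_sq_div_two_le_cos
  calc b j / j * (1 - Real.cos (j * θ)) ≤ b j / j * ((j * θ) ^ 2 / 2) := by
        have := hb0 j
        gcongr
    _ = θ ^ 2 / 2 * (j * b j) := by
        rcases j.eq_zero_or_pos with rfl | hj
        · simp
        · field_simp

lemma abs_im_centredExponent_le (hb : Summable b) (hb0 : ∀ j, 0 ≤ b j) {M : ℝ}
    (hM : HasSum (fun j : ℕ ↦ (j : ℝ) ^ 2 * b j) M) (θ : ℝ) :
    |(centredExponent b θ).im| ≤ |θ| ^ 3 * M := by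
  rw [← (hasSum_im_centredExponent hb θ).tsum_eq, ← Real.norm_eq_abs]
  refine tsum_of_norm_bounded (hM.mul_left (|θ| ^ 3)) fun j ↦ ?_
  rw [Real.norm_eq_abs, abs_mul, abs_div, Nat.abs_cast, abs_of_nonneg (hb0 j)]
  calc b j / j * |Real.sin (j * θ) - j * θ| ≤ b j / j * |j * θ| ^ 3 := by
        have := hb0 j
        gcongr
        exact abs_sin_sub_self_le _
    _ = |θ| ^ 3 * (j ^ 2 * b j) := by
        rw [abs_mul, Nat.abs_cast]
        rcases j.eq_zero_or_pos with rfl | hj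
        · simp
        · field_simp

lemma norm_centredExponent_sub_le (hb : Summable b) (hb' : Summable b') {D : ℝ}
    (hD : HasSum (fun j : ℕ ↦ j * |b' j - b j|) D) (θ : ℝ) :
    ‖centredExponent b' θ - centredExponent b θ‖ ≤ 2 * θ ^ 2 * D := by
  rw [← ((hasSum_centredTerm hb' θ).sub (hasSum_centredTerm hb θ)).tsum_eq]
  refine tsum_of_norm_bounded (hD.mul_left (2 * θ ^ 2)) fun j ↦ ?_
  rw [centredTerm, centredTerm, ← sub_mul, ← Complex.ofReal_sub, ← sub_div, norm_mul,
    Complex.norm_real, Real.norm_eq_abs, abs_div, Nat.abs_cast]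
  calc |b' j - b j| / j * _ ≤ |b' j - b j| / j * (2 * (j * θ) ^ 2) := by
        gcongr
        exact norm_exp_mul_I_sub_one_sub_le _
    _ = 2 * θ ^ 2 * (j * |b' j - b j|) := by
        rcases j.eq_zero_or_pos with rfl | hj
        · simp
        · field_simp

end CentredExponent

section LaplaceComparison

open Set (Icc)

variable {φ ψ : ℝ → ℂ} {R T V η : ℝ}

lemma norm_integral_sub_integral_le {f : ℝ → ℂ} {B : ℝ} (hf : ContinuousOn f (Icc (-R) R))
    (hT : 0 ≤ T) (hTR : T ≤ R) (hB : ∀ θ, T ≤ |θ| → |θ| ≤ R → ‖f θ‖ ≤ B) :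
    ‖(∫ θ in (-R)..R, f θ) - ∫ θ in (-T)..T, f θ‖ ≤ 2 * R * B := by
  have hint {u v : ℝ} (hu : -R ≤ u) (huv : u ≤ v) (hv : v ≤ R) : IntervalIntegrable f volume u v :=
    (hf.mono (Set.uIcc_of_le huv ▸ Set.Icc_subset_Icc hu hv)).intervalIntegrable
  have hleft := hint le_rfl (neg_le_neg hTR) (by linarith)
  have hmid := hint (neg_le_neg hTR) (neg_le_self hT) hTR
  have hright := hint (by linarith) hTR le_rfl
  have hleft_le : ‖∫ θ in (-R)..(-T), f θ‖ ≤ B * |-T - -R| := by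
    refine intervalIntegral.norm_integral_le_of_norm_le_const fun θ hθ ↦ ?_
    rw [Set.uIoc_of_le (by linarith)] at hθ
    apply hB <;> rw [abs_of_nonpos] <;> linarith [hθ.1, hθ.2]
  have hright_le : ‖∫ θ in T..R, f θ‖ ≤ B * |R - T| := by
    refine intervalIntegral.norm_integral_le_of_norm_le_const fun θ hθ ↦ ?_
    rw [Set.uIoc_of_le (by linarith)] at hθ
    apply hB <;> rw [abs_of_nonneg] <;> linarith [hθ.1, hθ.2]
  have hB0 : 0 ≤ B := (norm_nonneg _).trans (hB T (le_abs_self T) ((abs_of_nonneg hT).trans_le hTR))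
  rw [← intervalIntegral.integral_add_adjacent_intervals (hleft.trans hmid) hright,
    ← intervalIntegral.integral_add_adjacent_intervals hleft hmid, add_right_comm,
    add_sub_cancel_right]
  rw [abs_of_nonneg (by linarith)] at hleft_le hright_le
  linarith [norm_add_le (∫ θ in (-R)..(-T), f θ) (∫ θ in T..R, f θ), mul_nonneg hB0 hT]

lemma half_integral_norm_exp_le (hφ : ContinuousOn φ (Icc (-T) T)) (hT : 0 ≤ T)
    (him : ∀ θ ∈ Icc (-T) T, |(φ θ).im| ≤ 1) :
    (∫ θ in (-T)..T, ‖Complex.exp (φ θ)‖) / 2 ≤ ‖∫ θ in (-T)..T, Complex.exp (φ θ)‖ := by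
  have hTT : -T ≤ T := neg_le_self hT
  have hexp : ContinuousOn (fun θ ↦ Complex.exp (φ θ)) (Set.uIcc (-T) T) :=
    Set.uIcc_of_le hTT ▸ hφ.cexp
  have hre : (∫ θ in (-T)..T, Complex.exp (φ θ)).re = ∫ θ in (-T)..T, (Complex.exp (φ θ)).re := by
    simpa using (Complex.reCLM.intervalIntegral_comp_comm hexp.intervalIntegrable).symm
  refine le_trans ?_ (Complex.re_le_norm _)
  rw [hre, ← intervalIntegral.integral_div]
  refine intervalIntegral.integral_mono_on hTT (hexp.norm.intervalIntegrable.div_const 2)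
    (Complex.continuous_re.comp_continuousOn hexp).intervalIntegrable fun θ hθ ↦ ?_
  have hcos : 1 / 2 ≤ Real.cos (φ θ).im := by
    have hsq : (φ θ).im ^ 2 ≤ 1 := (sq_le_one_iff_abs_le_one _).2 (him θ hθ)
    linarith [Real.one_sub_sq_div_two_le_cos (x := (φ θ).im)]
  rw [Complex.norm_exp, Complex.exp_re, div_eq_mul_one_div]
  gcongr

lemma inv_sqrt_le_integral_norm_exp (hφ : ContinuousOn φ (Icc (-T) T)) (hT : 0 ≤ T) (hV : 0 < V)
    (hre : ∀ θ, -(V * θ ^ 2 / 2) ≤ (φ θ).re) (hTV : 1 ≤ T ^ 2 * V) :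
    (√V)⁻¹ ≤ ∫ θ in (-T)..T, ‖Complex.exp (φ θ)‖ := by
  set r := (√V)⁻¹ with hr
  have hr0 : 0 < r := inv_pos.2 (Real.sqrt_pos.2 hV)
  have hrV : V * r ^ 2 = 1 := by
    rw [hr, inv_pow, Real.sq_sqrt hV.le, mul_inv_cancel₀ hV.ne']
  have hrT : r ≤ T := by
    refine (pow_le_pow_iff_left₀ hr0.le hT two_ne_zero).1 (le_of_mul_le_mul_right ?_ hV)
    rwa [mul_comm, hrV]
  have hexp : ContinuousOn (fun θ ↦ ‖Complex.exp (φ θ)‖) (Icc (-T) T) := hφ.cexp.norm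
  have hint {u : ℝ} (hu : 0 ≤ u) (huT : u ≤ T) :
      IntervalIntegrable (fun θ ↦ ‖Complex.exp (φ θ)‖) volume (-u) u :=
    (hexp.mono (Set.uIcc_of_le (neg_le_self hu) ▸
      Set.Icc_subset_Icc (neg_le_neg huT) huT)).intervalIntegrable
  calc r = ∫ _ in (-r)..r, (1 / 2 : ℝ) := by
        rw [intervalIntegral.integral_const, smul_eq_mul]
        ring
    _ ≤ ∫ θ in (-r)..r, ‖Complex.exp (φ θ)‖ := by
      refine intervalIntegral.integral_mono_on (neg_le_self hr0.le) (by simp) (hint hr0.le hrT)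
        fun θ hθ ↦ ?_
      have hθr : V * θ ^ 2 ≤ V * r ^ 2 := by
        gcongr 1
        exact sq_le_sq' hθ.1 hθ.2
      rw [Complex.norm_exp]
      linarith [Real.add_one_le_exp (φ θ).re, hre θ]
    _ ≤ ∫ θ in (-T)..T, ‖Complex.exp (φ θ)‖ :=
      intervalIntegral.integral_mono_interval (neg_le_neg hrT) (neg_le_self hr0.le) hrT
        (.of_forall fun _ ↦ norm_nonneg _) (hint hT le_rfl)

lemma norm_integral_exp_sub_integral_exp_le (hφ : ContinuousOn φ (Icc (-T) T))
    (hψ : ContinuousOn ψ (Icc (-T) T)) (hT : 0 ≤ T)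
    (hη : η ≤ 1) (hψφ : ∀ θ ∈ Icc (-T) T, ‖ψ θ - φ θ‖ ≤ η) :
    ‖(∫ θ in (-T)..T, Complex.exp (ψ θ)) - ∫ θ in (-T)..T, Complex.exp (φ θ)‖ ≤
      2 * η * ∫ θ in (-T)..T, ‖Complex.exp (φ θ)‖ := by
  have hTT : -T ≤ T := neg_le_self hT
  rw [← Set.uIcc_of_le hTT] at hφ hψ
  rw [← intervalIntegral.integral_sub hψ.cexp.intervalIntegrable hφ.cexp.intervalIntegrable,
    ← intervalIntegral.integral_const_mul]
  refine intervalIntegral.norm_integral_le_of_norm_le hTT (.of_forall fun θ hθ ↦ ?_)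
    (hφ.cexp.norm.intervalIntegrable.const_mul _)
  have hclose := hψφ θ ⟨hθ.1.le, hθ.2⟩
  have hfactor : Complex.exp (ψ θ) - Complex.exp (φ θ) =
      (Complex.exp (ψ θ - φ θ) - 1) * Complex.exp (φ θ) := by
    rw [sub_mul, ← Complex.exp_add, sub_add_cancel, one_mul]
  rw [hfactor, norm_mul]
  gcongr
  exact (Complex.norm_exp_sub_one_le (hclose.trans hη)).trans (by gcongr)

theorem norm_integral_exp_sub_le_of_laplace {L : ℝ} (hφ : ContinuousOn φ (Icc (-R) R))
    (hψ : ContinuousOn ψ (Icc (-R) R)) (hT : 0 ≤ T) (hTR : T ≤ R) (hV : 0 < V)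
    (hre : ∀ θ, -(V * θ ^ 2 / 2) ≤ (φ θ).re) (hTV : 1 ≤ T ^ 2 * V)
    (him : ∀ θ ∈ Icc (-T) T, |(φ θ).im| ≤ 1) (hψφ : ∀ θ ∈ Icc (-T) T, ‖ψ θ - φ θ‖ ≤ η)
    (hη : η ≤ 1 / 4) (hφL : ∀ θ, T ≤ |θ| → |θ| ≤ R → (φ θ).re ≤ -L)
    (hψL : ∀ θ, T ≤ |θ| → |θ| ≤ R → (ψ θ).re ≤ -L)
    (hL : 2 * R * Real.exp (-L) ≤ η * (√V)⁻¹) :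
    ‖(∫ θ in (-R)..R, Complex.exp (ψ θ)) - ∫ θ in (-R)..R, Complex.exp (φ θ)‖ ≤
      16 * η * ‖∫ θ in (-R)..R, Complex.exp (φ θ)‖ := by
  have hsub : Icc (-T) T ⊆ Icc (-R) R := Set.Icc_subset_Icc (neg_le_neg hTR) hTR
  have hη0 : 0 ≤ η := (norm_nonneg _).trans (hψφ 0 ⟨neg_nonpos.2 hT, hT⟩)
  set J := ∫ θ in (-T)..T, ‖Complex.exp (φ θ)‖
  have hLJ : 2 * R * Real.exp (-L) ≤ η * J := hL.trans <| by
    gcongr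
    exact inv_sqrt_le_integral_norm_exp (hφ.mono hsub) hT hV hre hTV
  have hφtail := (norm_integral_sub_integral_le hφ.cexp hT hTR fun θ hθT hθR ↦ by
    rw [Complex.norm_exp]
    exact Real.exp_le_exp.2 (hφL θ hθT hθR)).trans hLJ
  have hψtail := (norm_integral_sub_integral_le hψ.cexp hT hTR fun θ hθT hθR ↦ by
    rw [Complex.norm_exp]
    exact Real.exp_le_exp.2 (hψL θ hθT hθR)).trans hLJ
  have hcentre := norm_integral_exp_sub_integral_exp_le (hφ.mono hsub) (hψ.mono hsub) hT
    (by linarith) hψφ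
  have hhalf := half_integral_norm_exp_le (hφ.mono hsub) hT him
  set Iφ := ∫ θ in (-R)..R, Complex.exp (φ θ)
  set Iψ := ∫ θ in (-R)..R, Complex.exp (ψ θ)
  set Sφ := ∫ θ in (-T)..T, Complex.exp (φ θ)
  set Sψ := ∫ θ in (-T)..T, Complex.exp (ψ θ)
  have hJ : 0 ≤ J := intervalIntegral.integral_nonneg (neg_le_self hT) fun _ _ ↦ norm_nonneg _
  have hIφ : J / 4 ≤ ‖Iφ‖ := by
    have hsmall : η * J ≤ 1 / 4 * J := by gcongr
    linarith [norm_sub_norm_le Sφ Iφ, norm_sub_rev Sφ Iφ]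
  calc ‖Iψ - Iφ‖ = ‖(Iψ - Sψ) - (Iφ - Sφ) + (Sψ - Sφ)‖ := by ring_nf
    _ ≤ ‖Iψ - Sψ‖ + ‖Iφ - Sφ‖ + ‖Sψ - Sφ‖ :=
      (norm_add_le _ _).trans (by gcongr; exact norm_sub_le _ _)
    _ ≤ 16 * η * (J / 4) := by linarith
    _ ≤ 16 * η * ‖Iφ‖ := by gcongr

end LaplaceComparison

section Permutations

/-- The partitions of `n` into parts that are at most `m`, as multisets of parts. -/
noncomputable def friablePartitions (n m : ℕ) : Finset (Multiset ℕ) :=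
  ((Finset.univ : Finset n.Partition).image Nat.Partition.parts).filter fun l ↦ ∀ i ∈ l, i ≤ m

/-- The order `z_l = ∏ i, i ^ c_i * c_i!` of the centralizer of a permutation whose cycles, fixed
points included, have the lengths in `l`, where `c_i` is the multiplicity of `i` in `l`. -/
def centralizerOrder (l : Multiset ℕ) : ℕ :=
  l.prod * ∏ i ∈ l.toFinset, (l.count i).factorial

variable {n m : ℕ} {l : Multiset ℕ}

lemma mem_friablePartitions :
    l ∈ friablePartitions n m ↔ l.sum = n ∧ ∀ i ∈ l, 1 ≤ i ∧ i ≤ m := by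
  rw [friablePartitions, Finset.mem_filter, Finset.mem_image]
  constructor
  · rintro ⟨⟨P, -, rfl⟩, hP⟩
    exact ⟨P.parts_sum, fun i hi ↦ ⟨P.parts_pos hi, hP i hi⟩⟩
  · rintro ⟨hsum, hl⟩
    exact ⟨⟨⟨l, fun {i} hi ↦ (hl i hi).1, hsum⟩, Finset.mem_univ _, rfl⟩, fun i hi ↦ (hl i hi).2⟩

lemma centralizerOrder_eq_of_subset {S : Finset ℕ} (hS : l.toFinset ⊆ S) :
    centralizerOrder l = l.prod * ∏ i ∈ S, (l.count i).factorial := by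
  rw [centralizerOrder, Finset.prod_subset hS fun i _ hi ↦ ?_]
  rw [Multiset.count_eq_zero_of_notMem (mt Multiset.mem_toFinset.2 hi), Nat.factorial_zero]

lemma centralizerOrder_pos (hl : 0 ∉ l) : 0 < centralizerOrder l :=
  Nat.mul_pos (Nat.pos_of_ne_zero (mt Multiset.prod_eq_zero_iff.1 hl))
    (Finset.prod_pos fun _ _ ↦ Nat.factorial_pos _)

lemma centralizerOrder_cons (i : ℕ) (l : Multiset ℕ) :
    centralizerOrder (i ::ₘ l) = i * (l.count i + 1) * centralizerOrder l := by
  have hi : i ∈ insert i l.toFinset := Finset.mem_insert_self _ _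
  have hrest : ∀ j ∈ (insert i l.toFinset).erase i,
      ((i ::ₘ l).count j).factorial = (l.count j).factorial := fun j hj ↦ by
    rw [Multiset.count_cons_of_ne (Finset.ne_of_mem_erase hj)]
  rw [centralizerOrder, Multiset.toFinset_cons,
    centralizerOrder_eq_of_subset (Finset.subset_insert i l.toFinset), Multiset.prod_cons,
    ← Finset.mul_prod_erase _ _ hi, ← Finset.mul_prod_erase _ (fun j ↦ (l.count j).factorial) hi,
    Finset.prod_congr rfl hrest, Multiset.count_cons_self, Nat.factorial_succ]
  ring

lemma filter_two_le_add_replicate_count_one (hl : 0 ∉ l) :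
    l.filter (2 ≤ ·) + Multiset.replicate (l.count 1) 1 = l := by
  conv_rhs => rw [← Multiset.filter_add_not (2 ≤ ·) l]
  rw [← Multiset.filter_eq']
  congr 1
  refine Multiset.filter_congr fun i hi ↦ ?_
  have hi0 : i ≠ 0 := fun h ↦ hl (h ▸ hi)
  lia

lemma sum_filter_two_le_add_count_one (hl : 0 ∉ l) :
    (l.filter (2 ≤ ·)).sum + l.count 1 = l.sum := by
  simpa using congrArg Multiset.sum (filter_two_le_add_replicate_count_one hl)

lemma centralizerOrder_eq_filter_two_le (hl : 0 ∉ l) :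
    centralizerOrder l = (l.count 1).factorial * (l.filter (2 ≤ ·)).prod *
      ∏ i ∈ (l.filter (2 ≤ ·)).toFinset, ((l.filter (2 ≤ ·)).count i).factorial := by
  have hsub : l.toFinset ⊆ insert 1 (l.filter (2 ≤ ·)).toFinset := fun i hi ↦ by
    have hi0 : i ≠ 0 := fun h ↦ hl (h ▸ Multiset.mem_toFinset.1 hi)
    simp only [Finset.mem_insert, Multiset.mem_toFinset, Multiset.mem_filter] at hi ⊢
    by_cases h1 : i = 1
    · exact .inl h1
    · exact .inr ⟨hi, by lia⟩
  have hprod : (l.filter (2 ≤ ·)).prod = l.prod := by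
    simpa using congrArg Multiset.prod (filter_two_le_add_replicate_count_one hl)
  have hcount : ∀ i ∈ (l.filter (2 ≤ ·)).toFinset,
      ((l.filter (2 ≤ ·)).count i).factorial = (l.count i).factorial := fun i hi ↦ by
    rw [Multiset.count_filter_of_pos (Multiset.of_mem_filter (Multiset.mem_toFinset.1 hi))]
  rw [centralizerOrder_eq_of_subset hsub, Finset.prod_insert (by simp), hprod,
    Finset.prod_congr rfl hcount]
  ring

lemma parts_partition_eq_iff_cycleType_eq (hl : 0 ∉ l) (hn : l.sum = n)
    (σ : Equiv.Perm (Fin n)) : σ.partition.parts = l ↔ σ.cycleType = l.filter (2 ≤ ·) := by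
  refine ⟨fun h ↦ by rw [← Equiv.Perm.filter_parts_partition_eq_cycleType, h], fun h ↦ ?_⟩
  have hcount : n - (l.filter (2 ≤ ·)).sum = l.count 1 := by
    have := sum_filter_two_le_add_count_one hl
    lia
  rw [Equiv.Perm.parts_partition, ← Equiv.Perm.sum_cycleType, h, Fintype.card_fin, hcount,
    filter_two_le_add_replicate_count_one hl]

lemma card_parts_partition_eq_mul_centralizerOrder (hl : 0 ∉ l) (hn : l.sum = n) :
    Nat.card {σ : Equiv.Perm (Fin n) // σ.partition.parts = l} * centralizerOrder l =
      n.factorial := by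
  have hsum := sum_filter_two_le_add_count_one hl
  have hcard := Equiv.Perm.card_of_cycleType_mul_eq (Fin n) (l.filter (2 ≤ ·))
  rw [Fintype.card_fin, if_pos ⟨by lia, fun i hi ↦ Multiset.of_mem_filter hi⟩,
    show n - (l.filter (2 ≤ ·)).sum = l.count 1 by lia,
    ← centralizerOrder_eq_filter_two_le hl] at hcard
  simp_rw [parts_partition_eq_iff_cycleType_eq hl hn]
  rw [Nat.card_eq_fintype_card, Fintype.card_subtype, hcard]

lemma zero_notMem_of_mem_friablePartitions (hl : l ∈ friablePartitions n m) : 0 ∉ l :=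
  fun h ↦ absurd ((mem_friablePartitions.1 hl).2 0 h).1 (by lia)

lemma parts_partition_mem_friablePartitions_iff (hm : 1 ≤ m) (σ : Equiv.Perm (Fin n)) :
    σ.partition.parts ∈ friablePartitions n m ↔ ∀ c ∈ σ.cycleType, c ≤ m := by
  rw [mem_friablePartitions]
  constructor
  · rintro ⟨-, hσ⟩ c hc
    rw [← Equiv.Perm.filter_parts_partition_eq_cycleType] at hc
    exact (hσ c (Multiset.mem_of_mem_filter hc)).2
  · refine fun hσ ↦ ⟨σ.partition.parts_sum.trans (Fintype.card_fin n),
      fun i hi ↦ ⟨σ.partition.parts_pos hi, ?_⟩⟩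
    rw [Equiv.Perm.parts_partition, Multiset.mem_add] at hi
    rcases hi with hi | hi
    · exact hσ i hi
    · exact (Multiset.eq_of_mem_replicate hi).trans_le hm

theorem permProb_eq_sum_friablePartitions (n : ℕ) (hm : 1 ≤ m) :
    permProb n m = ∑ l ∈ friablePartitions n m, (centralizerOrder l : ℝ)⁻¹ := by
  have hfiber := Finset.card_eq_sum_card_fiberwise (s := Finset.univ.filter
    fun σ : Equiv.Perm (Fin n) ↦ ∀ c ∈ σ.cycleType, c ≤ m) (f := fun σ ↦ σ.partition.parts)
    (t := friablePartitions n m) fun σ hσ ↦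
      (parts_partition_mem_friablePartitions_iff hm σ).2 (Finset.mem_filter.1 hσ).2
  rw [permProb, Nat.card_eq_fintype_card, Fintype.card_subtype, hfiber, Nat.cast_sum,
    Finset.sum_div]
  refine Finset.sum_congr rfl fun l hl ↦ ?_
  have hl0 := zero_notMem_of_mem_friablePartitions hl
  have hcard := card_parts_partition_eq_mul_centralizerOrder hl0 (mem_friablePartitions.1 hl).1
  have hfilter : (Finset.univ.filter fun σ : Equiv.Perm (Fin n) ↦ ∀ c ∈ σ.cycleType, c ≤ m).filter
      (fun σ ↦ σ.partition.parts = l) = Finset.univ.filter fun σ ↦ σ.partition.parts = l := by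
    rw [Finset.filter_filter]
    refine Finset.filter_congr fun σ _ ↦ and_iff_right_of_imp fun hσ ↦ ?_
    exact (parts_partition_mem_friablePartitions_iff hm σ).1 (hσ ▸ hl)
  have hpos : (centralizerOrder l : ℝ) ≠ 0 := Nat.cast_ne_zero.2 (centralizerOrder_pos hl0).ne'
  rw [hfilter, ← Fintype.card_subtype, ← Nat.card_eq_fintype_card, div_eq_iff (by positivity),
    ← hcard, Nat.cast_mul, mul_comm, mul_assoc, mul_inv_cancel₀ hpos, mul_one]

lemma permProb_pos (n m : ℕ) : 0 < permProb n m := by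
  rw [permProb, div_pos_iff_of_pos_right (by positivity), Nat.cast_pos]
  exact Nat.card_pos_iff.2 ⟨⟨1, by simp⟩, inferInstance⟩

lemma sum_friablePartitions_mem_erase {i : ℕ} (hi : 1 ≤ i) (him : i ≤ m) (n : ℕ)
    (g : Multiset ℕ → ℝ) :
    ∑ l ∈ friablePartitions (n + i) m with i ∈ l, g (l.erase i) =
      ∑ l ∈ friablePartitions n m, g l := by
  refine Finset.sum_nbij' (Multiset.erase · i) (i ::ₘ ·) (fun l hl ↦ ?_) (fun l hl ↦ ?_)
    (fun l hl ↦ Multiset.cons_erase (Finset.mem_filter.1 hl).2)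
    (fun l _ ↦ Multiset.erase_cons_head i l) (fun l _ ↦ rfl)
  · obtain ⟨hl, hil⟩ := Finset.mem_filter.1 hl
    obtain ⟨hsum, hparts⟩ := mem_friablePartitions.1 hl
    refine mem_friablePartitions.2 ⟨?_, fun j hj ↦ hparts j (Multiset.mem_of_mem_erase hj)⟩
    rw [← Multiset.cons_erase hil, Multiset.sum_cons] at hsum
    lia
  · obtain ⟨hsum, hparts⟩ := mem_friablePartitions.1 hl
    refine Finset.mem_filter.2 ⟨mem_friablePartitions.2 ⟨?_, fun j hj ↦ ?_⟩,
      Multiset.mem_cons_self i l⟩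
    · rw [Multiset.sum_cons, hsum, add_comm]
    · rcases Multiset.mem_cons.1 hj with rfl | hj
      · exact ⟨hi, him⟩
      · exact hparts j hj

lemma sum_mul_inv_centralizerOrder (hl : 0 ∉ l) :
    (l.sum : ℝ) * (centralizerOrder l : ℝ)⁻¹ =
      ∑ i ∈ l.toFinset, (centralizerOrder (l.erase i) : ℝ)⁻¹ := by
  rw [Finset.sum_multiset_count, Nat.cast_sum, Finset.sum_mul]
  refine Finset.sum_congr rfl fun i hi ↦ ?_
  rw [Multiset.mem_toFinset] at hi
  have hz := centralizerOrder_cons i (l.erase i)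
  rw [Multiset.cons_erase hi, Multiset.count_erase_self,
    Nat.sub_add_cancel (Multiset.one_le_count_iff_mem.2 hi)] at hz
  have hi0 : (i : ℝ) ≠ 0 := Nat.cast_ne_zero.2 fun h ↦ hl (h ▸ hi)
  have hcount : (l.count i : ℝ) ≠ 0 := Nat.cast_ne_zero.2 (Multiset.count_pos.2 hi).ne'
  rw [hz]
  push_cast
  rw [smul_eq_mul, Nat.cast_mul]
  field_simp

/-- The weight `j ↦ 1_{1 ≤ j ≤ m}`, for which
`∑ n, permProb n m * z ^ n = exp (∑ j, permWeight m j * z ^ j / j)`. -/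
noncomputable def permWeight (m : ℕ) : ℕ → ℝ :=
  Set.indicator (Set.Icc 1 m) 1

theorem isExpCoeff_permProb (hm : 1 ≤ m) : IsExpCoeff (permWeight m) (permProb · m) where
  zero := by
    rw [permProb, Nat.card_eq_one_iff_unique.2 ⟨inferInstance, ⟨1, by simp⟩⟩]
    simp
  succ n := by
    have hterm : ∀ l ∈ friablePartitions (n + 1) m,
        ((n : ℝ) + 1) * (centralizerOrder l : ℝ)⁻¹ = ∑ k ∈ Finset.range (n + 1),
          if k + 1 ∈ l then (centralizerOrder (l.erase (k + 1)) : ℝ)⁻¹ else 0 := fun l hl ↦ by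
      obtain ⟨hsum, hparts⟩ := mem_friablePartitions.1 hl
      have himage : l.toFinset =
          ((Finset.range (n + 1)).filter fun k ↦ k + 1 ∈ l).image (· + 1) := by
        ext i
        simp only [Multiset.mem_toFinset, Finset.mem_image, Finset.mem_filter, Finset.mem_range]
        refine ⟨fun hi ↦ ⟨i - 1, ?_⟩, by rintro ⟨k, ⟨-, hk⟩, rfl⟩; exact hk⟩
        have hle := Multiset.le_sum_of_mem hi
        have hpos := (hparts i hi).1
        rw [Nat.sub_add_cancel hpos]
        exact ⟨⟨by lia, hi⟩, rfl⟩
      rw [← Nat.cast_add_one, ← hsum,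
        sum_mul_inv_centralizerOrder (zero_notMem_of_mem_friablePartitions hl), hsum, himage,
        Finset.sum_image (add_left_injective 1).injOn, Finset.sum_filter]
    rw [permProb_eq_sum_friablePartitions _ hm, Finset.mul_sum, Finset.sum_congr rfl hterm,
      Finset.sum_comm]
    refine Finset.sum_congr rfl fun k hk ↦ ?_
    rw [← Finset.sum_filter, permProb_eq_sum_friablePartitions _ hm]
    by_cases hkm : k + 1 ≤ m
    · have hn : n + 1 = n - k + (k + 1) := by grind
      rw [hn, sum_friablePartitions_mem_erase (by lia) hkm (n - k)
        (fun l ↦ (centralizerOrder l : ℝ)⁻¹)]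
      simp [permWeight, hkm]
    · rw [Finset.filter_false_of_mem fun l hl h ↦ hkm ((mem_friablePartitions.1 hl).2 _ h).2]
      simp [permWeight, hkm]

end Permutations

section FriablePolynomials

open Polynomial UniqueFactorizationMonoid

variable {F : Type*} [Field F]

open Classical in
lemma natDegree_eq_sum_normalizedFactors {f : F[X]} (hf : f.Monic) :
    f.natDegree = ((normalizedFactors f).map natDegree).sum := by
  have hprod := leadingCoeff_mul_prod_normalizedFactors f
  rw [hf.leadingCoeff, C_1, one_mul] at hprod
  conv_lhs => rw [← hprod]
  exact natDegree_multiset_prod_of_monic _ fun P hP ↦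
    ((Polynomial.mem_normalizedFactors_iff hf.ne_zero).mp hP).2.1

open Classical in
lemma pow_dvd_iff_le_count_normalizedFactors {f P : F[X]} (hf : f ≠ 0) (hP : P.Monic)
    (hPi : Irreducible P) (k : ℕ) : P ^ k ∣ f ↔ k ≤ (normalizedFactors f).count P := by
  rw [pow_dvd_iff_le_emultiplicity, emultiplicity_eq_count_normalizedFactors hPi hf,
    hP.normalize_eq_self, Nat.cast_le]

open Classical in
/-- The pairs `(P, k)` with `P ^ k ∣ f` are listed by `j = k * P.natDegree`, so that exchanging
sums yields a convolution in `j`. -/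
lemma card_filter_pow_div_natDegree_dvd {f P : F[X]} (hf : f.Monic) (hP : P.Monic)
    (hPi : Irreducible P) :
    (normalizedFactors f).count P =
      {j ∈ Finset.Ioc 0 f.natDegree | P.natDegree ∣ j ∧ P ^ (j / P.natDegree) ∣ f}.card := by
  have hd := hPi.natDegree_pos
  set d := P.natDegree with hdef
  set c := (normalizedFactors f).count P
  have hcd : c * d ≤ f.natDegree := by
    rw [hdef, ← natDegree_pow]
    exact natDegree_le_of_dvd
      ((pow_dvd_iff_le_count_normalizedFactors hf.ne_zero hP hPi c).mpr le_rfl) hf.ne_zero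
  rw [← Nat.mul_div_cancel c hd, ← Nat.Ioc_filter_dvd_card_eq_div]
  congr 1
  ext j
  simp only [Finset.mem_filter, Finset.mem_Ioc,
    pow_dvd_iff_le_count_normalizedFactors hf.ne_zero hP hPi]
  constructor
  · rintro ⟨⟨hj, hjc⟩, k, rfl⟩
    have hk : k ≤ c := Nat.le_of_mul_le_mul_left (by rwa [mul_comm c] at hjc) hd
    exact ⟨⟨hj, hjc.trans hcd⟩, dvd_mul_right _ _, by rwa [Nat.mul_div_cancel_left k hd]⟩
  · rintro ⟨⟨hj, -⟩, ⟨k, rfl⟩, hkc⟩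
    have hkc : k ≤ c := by rwa [Nat.mul_div_cancel_left k hd] at hkc
    exact ⟨⟨hj, by rw [mul_comm c]; exact Nat.mul_le_mul_left d hkc⟩, dvd_mul_right _ _⟩

lemma natCard_monic_natDegree_eq (n : ℕ) :
    Nat.card {f : F[X] // f.Monic ∧ f.natDegree = n} = Nat.card F ^ n := by
  rw [Nat.card_congr ((monicEquivDegreeLT (R := F) n).trans (degreeLTEquiv F n).toEquiv)]
  simp [Nat.card_fun]

section Finite

variable [Finite F]

lemma finite_monic_natDegree_eq (n : ℕ) : {f : F[X] | f.Monic ∧ f.natDegree = n}.Finite :=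
  Set.finite_coe_iff.mp <| Finite.of_equiv _
    ((monicEquivDegreeLT (R := F) n).trans (degreeLTEquiv F n).toEquiv).symm

lemma finite_monic_irreducible_natDegree_le (m : ℕ) :
    {P : F[X] | P.Monic ∧ Irreducible P ∧ P.natDegree ≤ m}.Finite := by
  refine ((Set.finite_Iic m).biUnion fun n _ ↦ finite_monic_natDegree_eq (F := F) n).subset ?_
  rintro P ⟨hP, -, hPm⟩
  exact Set.mem_biUnion (Set.mem_Iic.mpr hPm) ⟨hP, rfl⟩

variable (F) in
/-- The monic irreducible polynomials of degree at most `m`, the index set of the Euler product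
`FqFun F m`. -/
noncomputable def monicIrreducibles (m : ℕ) : Finset F[X] :=
  (finite_monic_irreducible_natDegree_le m).toFinset

variable (F) in
/-- The `m`-friable monic polynomials of degree `n`, counted by `polyProb F n m`. -/
noncomputable def friablePolys (n m : ℕ) : Finset F[X] :=
  ((finite_monic_natDegree_eq n).subset (t := {f : F[X] | f.Monic ∧ f.natDegree = n ∧
    ∀ P : F[X], P.Monic → Irreducible P → P ∣ f → P.natDegree ≤ m})
    fun _ hf ↦ ⟨hf.1, hf.2.1⟩).toFinset

lemma mem_monicIrreducibles {m : ℕ} {P : F[X]} :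
    P ∈ monicIrreducibles F m ↔ P.Monic ∧ Irreducible P ∧ P.natDegree ≤ m := by
  simp [monicIrreducibles]

lemma natDegree_pos_of_mem_monicIrreducibles {m : ℕ} {P : F[X]}
    (hP : P ∈ monicIrreducibles F m) : 0 < P.natDegree :=
  (mem_monicIrreducibles.mp hP).2.1.natDegree_pos

lemma mem_friablePolys {n m : ℕ} {f : F[X]} :
    f ∈ friablePolys F n m ↔ f.Monic ∧ f.natDegree = n ∧
      ∀ P : F[X], P.Monic → Irreducible P → P ∣ f → P.natDegree ≤ m := by
  simp [friablePolys]

open Classical in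
lemma eq_sum_natDegree_of_mem_friablePolys {n m : ℕ} {f : F[X]} (hf : f ∈ friablePolys F n m) :
    n = ∑ P ∈ monicIrreducibles F m, ∑ j ∈ Finset.Ioc 0 n,
      if P.natDegree ∣ j ∧ P ^ (j / P.natDegree) ∣ f then P.natDegree else 0 := by
  obtain ⟨hf1, rfl, hfm⟩ := mem_friablePolys.mp hf
  have hsub : (normalizedFactors f).toFinset ⊆ monicIrreducibles F m := by
    intro P hP
    obtain ⟨hPi, hP1, hPf⟩ :=
      (Polynomial.mem_normalizedFactors_iff hf1.ne_zero).mp (Multiset.mem_toFinset.mp hP)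
    exact mem_monicIrreducibles.mpr ⟨hP1, hPi, hfm P hP1 hPi hPf⟩
  calc f.natDegree
      = ∑ P ∈ (normalizedFactors f).toFinset, (normalizedFactors f).count P * P.natDegree := by
        rw [natDegree_eq_sum_normalizedFactors hf1, Finset.sum_multiset_map_count]
        rfl
    _ = ∑ P ∈ monicIrreducibles F m, (normalizedFactors f).count P * P.natDegree :=
        Finset.sum_subset hsub fun P _ hP ↦ by
          rw [Multiset.count_eq_zero.mpr (mt Multiset.mem_toFinset.mpr hP), zero_mul]
    _ = _ := Finset.sum_congr rfl fun P hP ↦ by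
        obtain ⟨hP1, hPi, -⟩ := mem_monicIrreducibles.mp hP
        rw [card_filter_pow_div_natDegree_dvd hf1 hP1 hPi, ← Finset.sum_filter,
          Finset.sum_const, smul_eq_mul]

open Classical in
lemma card_filter_pow_dvd_friablePolys {n m k : ℕ} {P : F[X]} (hP : P ∈ monicIrreducibles F m)
    (hk : k * P.natDegree ≤ n) :
    {f ∈ friablePolys F n m | P ^ k ∣ f}.card =
      (friablePolys F (n - k * P.natDegree) m).card := by
  obtain ⟨hP1, -, hPm⟩ := mem_monicIrreducibles.mp hP
  rw [← Finset.card_image_of_injective (friablePolys F (n - k * P.natDegree) m)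
    (mul_right_injective₀ (pow_ne_zero k hP1.ne_zero))]
  congr 1
  ext f
  simp only [Finset.mem_filter, Finset.mem_image, mem_friablePolys]
  constructor
  · rintro ⟨⟨hf1, hfn, hfm⟩, g, rfl⟩
    have hg1 : g.Monic := (hP1.pow k).of_mul_monic_left hf1
    rw [(hP1.pow k).natDegree_mul hg1, natDegree_pow] at hfn
    exact ⟨g, ⟨hg1, by omega, fun R hR hRi hRg ↦ hfm R hR hRi (hRg.mul_left _)⟩, rfl⟩
  · rintro ⟨g, ⟨hg1, hgn, hgm⟩, rfl⟩
    refine ⟨⟨(hP1.pow k).mul hg1, ?_, fun R hR hRi hRf ↦ ?_⟩, dvd_mul_right _ _⟩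
    · rw [(hP1.pow k).natDegree_mul hg1, natDegree_pow]
      omega
    · rcases hRi.prime.dvd_or_dvd hRf with hRP | hRg
      · exact (natDegree_le_of_dvd (hRi.prime.dvd_of_dvd_pow hRP) hP1.ne_zero).trans hPm
      · exact hgm R hR hRi hRg

theorem mul_card_friablePolys (n m : ℕ) :
    n * (friablePolys F n m).card = ∑ j ∈ Finset.Ioc 0 n,
      (∑ P ∈ monicIrreducibles F m, if P.natDegree ∣ j then P.natDegree else 0) *
        (friablePolys F (n - j) m).card := by
  classical
  calc n * (friablePolys F n m).card
      = ∑ f ∈ friablePolys F n m, ∑ P ∈ monicIrreducibles F m, ∑ j ∈ Finset.Ioc 0 n,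
          if P.natDegree ∣ j ∧ P ^ (j / P.natDegree) ∣ f then P.natDegree else 0 := by
        rw [Finset.sum_congr rfl fun f hf ↦ (eq_sum_natDegree_of_mem_friablePolys hf).symm,
          Finset.sum_const, smul_eq_mul, mul_comm]
    _ = ∑ j ∈ Finset.Ioc 0 n, ∑ P ∈ monicIrreducibles F m, ∑ f ∈ friablePolys F n m,
          if P.natDegree ∣ j ∧ P ^ (j / P.natDegree) ∣ f then P.natDegree else 0 := by
        rw [Finset.sum_comm, Finset.sum_comm (s := Finset.Ioc 0 n)]
        exact Finset.sum_congr rfl fun P _ ↦ Finset.sum_comm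
    _ = _ := Finset.sum_congr rfl fun j hj ↦ by
        rw [Finset.sum_mul]
        refine Finset.sum_congr rfl fun P hP ↦ ?_
        by_cases hPj : P.natDegree ∣ j
        · have hle : j / P.natDegree * P.natDegree = j := Nat.div_mul_cancel hPj
          simp only [hPj, true_and, if_true]
          rw [← Finset.sum_filter, Finset.sum_const, smul_eq_mul, mul_comm,
            card_filter_pow_dvd_friablePolys hP (hle.trans_le (Finset.mem_Ioc.mp hj).2), hle]
        · simp [hPj]

end Finite

end FriablePolynomials

section FriableMangoldt

open Polynomial

variable {F : Type} [Field F] [Fintype F]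

variable (F) in
/-- The coefficients of the power series of `z * F_q'(z) / F_q(z)`: the von Mangoldt function of
`F[X]` summed over `m`-friable polynomials of degree `j`, divided by `q ^ j`. -/
noncomputable def friableMangoldt (m j : ℕ) : ℝ :=
  (∑ P ∈ monicIrreducibles F m, if P.natDegree ∣ j ∧ j ≠ 0 then (P.natDegree : ℝ) else 0) /
    (Fintype.card F : ℝ) ^ j

lemma one_lt_card_cast : 1 < (Fintype.card F : ℝ) := by
  exact_mod_cast Fintype.one_lt_card

lemma card_cast_pos : 0 < (Fintype.card F : ℝ) :=
  zero_lt_one.trans one_lt_card_cast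

lemma friableMangoldt_zero (m : ℕ) : friableMangoldt F m 0 = 0 := by
  simp [friableMangoldt]

lemma friableMangoldt_nonneg (m j : ℕ) : 0 ≤ friableMangoldt F m j :=
  div_nonneg (Finset.sum_nonneg fun P _ ↦ by positivity) (by positivity)

lemma polyProb_eq_card_div (n m : ℕ) :
    polyProb F n m = (friablePolys F n m).card / (Fintype.card F : ℝ) ^ n := by
  rw [polyProb, ← Nat.card_eq_finsetCard]
  congr 2
  exact Nat.card_congr (Equiv.subtypeEquivRight fun f ↦ mem_friablePolys.symm)

lemma polyProb_of_le {n m : ℕ} (h : n ≤ m) : polyProb F n m = 1 := by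
  have hq := pow_ne_zero n (card_cast_pos (F := F)).ne'
  rw [polyProb, div_eq_one_iff_eq hq, ← Nat.card_eq_fintype_card, ← Nat.cast_pow,
    ← natCard_monic_natDegree_eq]
  congr 1
  refine Nat.card_congr (Equiv.subtypeEquivRight fun f ↦ and_congr_right fun hf ↦
    and_iff_left_of_imp fun hn P _ _ hP ↦ ?_)
  exact (natDegree_le_of_dvd hP hf.ne_zero).trans (hn.trans_le h)

theorem isExpCoeff_polyProb (m : ℕ) : IsExpCoeff (friableMangoldt F m) (polyProb F · m) where
  zero := polyProb_of_le (Nat.zero_le m)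
  succ n := by
    have hrec := congrArg (Nat.cast (R := ℝ)) (mul_card_friablePolys (F := F) (n + 1) m)
    rw [← Finset.Ico_add_one_add_one_eq_Ioc, Finset.sum_Ico_eq_sum_range] at hrec
    push_cast at hrec
    rw [polyProb_eq_card_div, ← mul_div_assoc, hrec, Finset.sum_div]
    refine Finset.sum_congr (by simp) fun k hk ↦ ?_
    have hkn : n + 1 = (k + 1) + (n - k) := by
      have := Finset.mem_range.mp hk
      omega
    rw [polyProb_eq_card_div, friableMangoldt, div_mul_div_comm, ← pow_add, ← hkn]
    simp [add_comm 1 k]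

lemma friableMangoldt_eq_one {m j : ℕ} (hj : 1 ≤ j) (hjm : j ≤ m) :
    friableMangoldt F m j = 1 := by
  induction j using Nat.strong_induction_on with
  | _ j ih =>
    obtain ⟨n, rfl⟩ := Nat.exists_eq_add_of_le' hj
    have hrec := (isExpCoeff_polyProb (F := F) m).succ n
    have hprev : ∀ k ∈ Finset.range n, friableMangoldt F m (k + 1) * polyProb F (n - k) m = 1 := by
      intro k hk
      have hkn := Finset.mem_range.mp hk
      rw [ih (k + 1) (by omega) (by omega) (by omega), polyProb_of_le (by omega), one_mul]
    rw [Finset.sum_range_succ, Finset.sum_congr rfl hprev, polyProb_of_le hjm, Nat.sub_self,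
      polyProb_of_le (Nat.zero_le m)] at hrec
    simp only [Finset.sum_const, Finset.card_range, nsmul_eq_mul] at hrec
    linarith

/-- Gauss's formula: `∑_{d ∣ j} d * #{P : deg P = d} = q ^ j`. -/
lemma sum_natDegree_of_dvd {m j : ℕ} (hj : 1 ≤ j) (hjm : j ≤ m) :
    (∑ P ∈ monicIrreducibles F m, if P.natDegree ∣ j ∧ j ≠ 0 then (P.natDegree : ℝ) else 0) =
      (Fintype.card F : ℝ) ^ j := by
  have h := friableMangoldt_eq_one (F := F) hj hjm
  rwa [friableMangoldt, div_eq_one_iff_eq (pow_pos card_cast_pos j).ne'] at h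

lemma sum_natDegree_of_natDegree_eq_le {m d : ℕ} (hd : 1 ≤ d) (hdm : d ≤ m) :
    ∑ P ∈ monicIrreducibles F m with P.natDegree = d, (P.natDegree : ℝ) ≤
      (Fintype.card F : ℝ) ^ d := by
  rw [← sum_natDegree_of_dvd hd hdm, Finset.sum_filter]
  refine Finset.sum_le_sum fun P _ ↦ ?_
  split_ifs with heq hdvd
  · exact le_rfl
  · exact absurd ⟨heq.dvd, by omega⟩ hdvd
  · positivity
  · exact le_rfl

lemma sum_Icc_pow_le {x : ℝ} (hx : 2 ≤ x) (k : ℕ) : ∑ d ∈ Finset.Icc 1 k, x ^ d ≤ 2 * x ^ k := by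
  induction k with
  | zero => norm_num
  | succ k ih =>
    rw [Finset.sum_Icc_succ_top (by omega), pow_succ]
    nlinarith [pow_pos (zero_lt_two.trans_le hx) k]

lemma friableMangoldt_le {m j k : ℕ} (hkm : k ≤ m) (h : ∀ d ≤ m, d ∣ j → j ≠ 0 → d ≤ k) :
    friableMangoldt F m j ≤ 2 * (Fintype.card F : ℝ) ^ k / (Fintype.card F : ℝ) ^ j := by
  have hq : (2 : ℝ) ≤ Fintype.card F := by exact_mod_cast Fintype.one_lt_card
  refine div_le_div_of_nonneg_right ?_ (by positivity)
  calc _ ≤ ∑ d ∈ Finset.Icc 1 k, ∑ P ∈ monicIrreducibles F m with P.natDegree = d,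
            (P.natDegree : ℝ) := by
        simp_rw [Finset.sum_filter]
        rw [Finset.sum_comm]
        refine Finset.sum_le_sum fun P hP ↦ ?_
        have hPm := (mem_monicIrreducibles.mp hP).2.2
        have hP0 := natDegree_pos_of_mem_monicIrreducibles hP
        rw [Finset.sum_ite_eq]
        split_ifs with hdvd hmem hmem
        · exact le_rfl
        · exact absurd (Finset.mem_Icc.mpr ⟨hP0, h _ hPm hdvd.1 hdvd.2⟩) hmem
        · positivity
        · exact le_rfl
    _ ≤ ∑ d ∈ Finset.Icc 1 k, (Fintype.card F : ℝ) ^ d := Finset.sum_le_sum fun d hd ↦ by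
        obtain ⟨hd1, hdk⟩ := Finset.mem_Icc.mp hd
        exact sum_natDegree_of_natDegree_eq_le hd1 (hdk.trans hkm)
    _ ≤ _ := sum_Icc_pow_le hq k

lemma friableMangoldt_le_of_lt {m j : ℕ} (hj : m < j) (hj2 : j ≤ 2 * m) :
    friableMangoldt F m j ≤ 2 * (Fintype.card F : ℝ) ^ (j / 2) / (Fintype.card F : ℝ) ^ j := by
  refine friableMangoldt_le (by omega) ?_
  rintro d hdm ⟨e, rfl⟩ hde
  have he : 2 ≤ e := by
    by_contra! h
    interval_cases e <;> omega
  rw [Nat.le_div_iff_mul_le two_pos]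
  exact Nat.mul_le_mul_left d he

lemma inv_card_pow_le_friableMangoldt {m : ℕ} (hm : 1 ≤ m) :
    ((Fintype.card F : ℝ) ^ m)⁻¹ ≤ friableMangoldt F m (2 * m) := by
  have := card_cast_pos (F := F)
  rw [friableMangoldt, inv_eq_one_div, div_le_div_iff₀ (by positivity) (by positivity), one_mul,
    two_mul, pow_add]
  gcongr
  rw [← sum_natDegree_of_dvd hm le_rfl]
  refine Finset.sum_le_sum fun P _ ↦ ?_
  split_ifs with hm2 h2m
  · exact le_rfl
  · exact absurd ⟨hm2.1.trans ⟨2, (two_mul m).symm.trans (mul_comm 2 m)⟩, by omega⟩ h2m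
  · positivity
  · exact le_rfl

lemma hasSum_ite_dvd_iff {d : ℕ} (hd : 0 < d) {f : ℕ → ℝ} {s : ℝ} :
    HasSum (fun j ↦ if d ∣ j ∧ j ≠ 0 then f j else 0) s ↔
      HasSum (fun k ↦ f (d * (k + 1))) s := by
  have hinj : Function.Injective fun k : ℕ ↦ d * (k + 1) := fun k l h ↦
    Nat.succ_injective (Nat.eq_of_mul_eq_mul_left hd h)
  rw [← hinj.hasSum_iff]
  · refine iff_of_eq (congrArg (HasSum · s) (funext fun k ↦ ?_))
    exact if_pos ⟨dvd_mul_right _ _, by positivity⟩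
  · rintro j hj
    refine if_neg ?_
    rintro ⟨⟨k, rfl⟩, hk⟩
    have hk0 : k ≠ 0 := right_ne_zero_of_mul hk
    exact hj ⟨k - 1, by simp only [Nat.sub_add_cancel (Nat.pos_of_ne_zero hk0)]⟩

lemma FqFun_eq_prod (m : ℕ) : FqFun F m = fun z ↦
    ∏ P ∈ monicIrreducibles F m, (1 - (z / (Fintype.card F : ℝ)) ^ P.natDegree)⁻¹ :=
  funext fun _ ↦ finprod_mem_eq_finite_toFinset_prod _ _

lemma friableMangoldt_mul_pow (m j : ℕ) (z : ℝ) :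
    friableMangoldt F m j * z ^ j = ∑ P ∈ monicIrreducibles F m,
      if P.natDegree ∣ j ∧ j ≠ 0 then P.natDegree * (z / (Fintype.card F : ℝ)) ^ j else 0 := by
  rw [friableMangoldt, div_mul_eq_mul_div, Finset.sum_mul, Finset.sum_div]
  refine Finset.sum_congr rfl fun P _ ↦ ?_
  rw [ite_mul, zero_mul, ite_div, zero_div, div_pow, mul_div_assoc]

variable {z : ℝ}

lemma abs_div_card_pow_lt_one (hz : |z| < Fintype.card F) {d : ℕ} (hd : 0 < d) :
    |(z / (Fintype.card F : ℝ)) ^ d| < 1 := by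
  have hq := card_cast_pos (F := F)
  rw [abs_pow, abs_div, abs_of_pos hq]
  exact pow_lt_one₀ (by positivity) ((div_lt_one hq).mpr hz) hd.ne'

theorem FqFun_eq_exp_tsum (m : ℕ) (hz : |z| < Fintype.card F) :
    FqFun F m z = Real.exp (∑' j : ℕ, friableMangoldt F m j * z ^ j / j) := by
  have hlt {P : F[X]} (hP : P ∈ monicIrreducibles F m) := abs_div_card_pow_lt_one hz
    (natDegree_pos_of_mem_monicIrreducibles hP)
  have hsum : HasSum (fun j : ℕ ↦ friableMangoldt F m j * z ^ j / j)
      (∑ P ∈ monicIrreducibles F m, -Real.log (1 - (z / Fintype.card F) ^ P.natDegree)) := by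
    simp_rw [friableMangoldt_mul_pow, Finset.sum_div, ite_div, zero_div]
    refine hasSum_sum fun P hP ↦ ?_
    have hd := natDegree_pos_of_mem_monicIrreducibles hP
    rw [hasSum_ite_dvd_iff hd]
    refine (Real.hasSum_pow_div_log_of_abs_lt_one (hlt hP)).congr_fun fun k ↦ ?_
    rw [← pow_mul]
    push_cast
    rw [mul_div_mul_left _ _ (by positivity)]
  rw [hsum.tsum_eq, FqFun_eq_prod, Real.exp_sum]
  refine Finset.prod_congr rfl fun P hP ↦ ?_
  rw [Real.exp_neg, Real.exp_log (sub_pos.mpr (abs_lt.mp (hlt hP)).2)]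

lemma hasDerivAt_inv_one_sub_div_pow (q : ℝ) {d : ℕ} (hz : (z / q) ^ d ≠ 1) :
    HasDerivAt (fun w ↦ (1 - (w / q) ^ d)⁻¹)
      (d * (z / q) ^ (d - 1) * (1 / q) / (1 - (z / q) ^ d) ^ 2) z := by
  have hpow : HasDerivAt (fun w ↦ 1 - (w / q) ^ d) (-(d * (z / q) ^ (d - 1) * (1 / q))) z :=
    (((hasDerivAt_id z).div_const q).pow d).const_sub 1
  exact (hpow.inv (sub_ne_zero.mpr hz.symm)).congr_deriv (by rw [neg_neg])

lemma mul_logDeriv_inv_one_sub_div_pow {q : ℝ} (hq : q ≠ 0) {d : ℕ} (hd : 0 < d)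
    (hz : (z / q) ^ d ≠ 1) :
    z * logDeriv (fun w ↦ (1 - (w / q) ^ d)⁻¹) z = d * (z / q) ^ d * (1 - (z / q) ^ d)⁻¹ := by
  have hz' : 1 - (z / q) ^ d ≠ 0 := sub_ne_zero.mpr hz.symm
  rw [logDeriv_apply, (hasDerivAt_inv_one_sub_div_pow q hz).deriv,
    ← mul_pow_sub_one hd.ne' (z / q)]
  rw [← mul_pow_sub_one hd.ne' (z / q)] at hz'
  field_simp

theorem hasSum_friableMangoldt_mul_pow (m : ℕ) (hz : |z| < Fintype.card F) :
    HasSum (fun j ↦ friableMangoldt F m j * z ^ j)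
      (z * deriv (FqFun F m) z / FqFun F m z) := by
  have hlt {P : F[X]} (hP : P ∈ monicIrreducibles F m) := abs_div_card_pow_lt_one hz
    (natDegree_pos_of_mem_monicIrreducibles hP)
  have hne {P : F[X]} (hP : P ∈ monicIrreducibles F m) := (abs_lt.mp (hlt hP)).2.ne
  have hlog : z * deriv (FqFun F m) z / FqFun F m z = ∑ P ∈ monicIrreducibles F m,
      P.natDegree * (z / Fintype.card F) ^ P.natDegree *
        (1 - (z / Fintype.card F) ^ P.natDegree)⁻¹ := by
    rw [mul_div_assoc, ← logDeriv_apply, FqFun_eq_prod, logDeriv_prod, Finset.mul_sum]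
    · exact Finset.sum_congr rfl fun P hP ↦ mul_logDeriv_inv_one_sub_div_pow card_cast_pos.ne'
        (natDegree_pos_of_mem_monicIrreducibles hP) (hne hP)
    · exact fun P hP ↦ inv_ne_zero (sub_ne_zero.mpr (hne hP).symm)
    · exact fun P hP ↦ (hasDerivAt_inv_one_sub_div_pow _ (hne hP)).differentiableAt
  rw [hlog]
  simp_rw [friableMangoldt_mul_pow]
  refine hasSum_sum fun P hP ↦ ?_
  rw [hasSum_ite_dvd_iff (natDegree_pos_of_mem_monicIrreducibles hP)]
  refine ((hasSum_geometric_of_abs_lt_one (hlt hP)).mul_left _).congr_fun fun k ↦ ?_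
  ring

end FriableMangoldt

section FriableWeights

variable {Q y r N : ℝ} {m : ℕ} {a : ℕ → ℝ}

lemma permWeight_of_le {j : ℕ} (hj : 1 ≤ j) (hjm : j ≤ m) : permWeight m j = 1 := by
  simp [permWeight, hj, hjm]

lemma permWeight_of_lt {j : ℕ} (hj : m < j) : permWeight m j = 0 := by
  simp [permWeight, hj]

lemma permWeight_nonneg (m j : ℕ) : 0 ≤ permWeight m j :=
  Set.indicator_nonneg (fun _ _ ↦ zero_le_one) j

lemma hasSum_permWeight_mul (m : ℕ) (f : ℕ → ℝ) :
    HasSum (fun j ↦ permWeight m j * f j) (∑ j ∈ Finset.Icc 1 m, f j) := by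
  have h : ∑ j ∈ Finset.Icc 1 m, f j = ∑ j ∈ Finset.Icc 1 m, permWeight m j * f j :=
    Finset.sum_congr rfl fun j hj ↦ by
      rw [permWeight_of_le (Finset.mem_Icc.1 hj).1 (Finset.mem_Icc.1 hj).2, one_mul]
  rw [h]
  exact hasSum_sum_of_ne_finset_zero fun j hj ↦ by
    rw [permWeight, Set.indicator_of_notMem (by simpa using hj), zero_mul]

/-- Weights `a` on the positive integers which agree with `permWeight m` up to `m` and are small
afterwards, in the way the weights `friableMangoldt` over a field with `Q` elements are. -/
structure FriableWeights (Q : ℝ) (m : ℕ) (a : ℕ → ℝ) : Prop where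
  nonneg (j : ℕ) : 0 ≤ a j
  zero : a 0 = 0
  eq_one {j : ℕ} : 1 ≤ j → j ≤ m → a j = 1
  le (j : ℕ) : a j ≤ 2 * Q ^ m / Q ^ j
  le_of_lt {j : ℕ} : m < j → j ≤ 2 * m → a j ≤ 2 / √Q ^ j
  inv_pow_le : (Q ^ m)⁻¹ ≤ a (2 * m)

theorem friableWeights_friableMangoldt {F : Type} [Field F] [Fintype F] (hm : 1 ≤ m) :
    FriableWeights (Fintype.card F) m (friableMangoldt F m) where
  nonneg := friableMangoldt_nonneg m
  zero := friableMangoldt_zero m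
  eq_one := friableMangoldt_eq_one
  le j := friableMangoldt_le le_rfl fun _ hd _ _ ↦ hd
  le_of_lt {j} hj hj2 := by
    have hQ := card_cast_pos (F := F)
    have hs : 1 ≤ √(Fintype.card F : ℝ) := Real.one_le_sqrt.2 one_lt_card_cast.le
    have hsq : √(Fintype.card F : ℝ) ^ 2 = Fintype.card F := Real.sq_sqrt hQ.le
    refine (friableMangoldt_le_of_lt hj hj2).trans ?_
    rw [div_le_div_iff₀ (by positivity) (by positivity), mul_assoc]
    gcongr
    calc (Fintype.card F : ℝ) ^ (j / 2) * √(Fintype.card F) ^ j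
        = √(Fintype.card F : ℝ) ^ (2 * (j / 2) + j) := by rw [pow_add, pow_mul, hsq]
      _ ≤ √(Fintype.card F : ℝ) ^ (2 * j) := pow_le_pow_right₀ hs (by omega)
      _ = (Fintype.card F : ℝ) ^ j := by rw [pow_mul, hsq]
  inv_pow_le := inv_card_pow_le_friableMangoldt hm

lemma FriableWeights.sub_permWeight_of_le (h : FriableWeights Q m a) {j : ℕ} (hj : j ≤ m) :
    a j - permWeight m j = 0 := by
  rcases j.eq_zero_or_pos with rfl | hj0
  · simp [h.zero, permWeight]
  · rw [h.eq_one hj0 hj, permWeight_of_le hj0 hj, sub_self]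

lemma FriableWeights.sub_permWeight_nonneg (h : FriableWeights Q m a) (j : ℕ) :
    0 ≤ a j - permWeight m j := by
  rcases le_or_gt j m with hj | hj
  · rw [h.sub_permWeight_of_le hj]
  · rw [permWeight_of_lt hj, sub_zero]
    exact h.nonneg j

lemma FriableWeights.pow_le (h : FriableWeights Q m a) (hm : 1 ≤ m) (hy : 0 ≤ y)
    (hN : HasSum (fun j ↦ a j * y ^ j) N) : y ^ m ≤ N := by
  have := le_hasSum hN m fun j _ ↦ mul_nonneg (h.nonneg j) (by positivity)
  rwa [h.eq_one hm le_rfl, one_mul] at this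

lemma hasSum_sub_permWeight_mul_pow (m : ℕ) (hN : HasSum (fun j ↦ a j * y ^ j) N) :
    HasSum (fun j ↦ (a j - permWeight m j) * y ^ j) (N - ∑ j ∈ Finset.Icc 1 m, y ^ j) := by
  simpa only [sub_mul] using hN.sub (hasSum_permWeight_mul m (y ^ ·))

lemma FriableWeights.mul_pow_add_two_mul_le (h : FriableWeights Q m a) (hQ : 0 < Q) (hy : 0 < y)
    (hyr : y ≤ r * Q) (i : ℕ) :
    a (i + 2 * m) * y ^ (i + 2 * m) ≤ 2 * (y ^ (2 * m) / Q ^ m) * r ^ i := by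
  calc a (i + 2 * m) * y ^ (i + 2 * m)
      ≤ 2 * Q ^ m / Q ^ (i + 2 * m) * y ^ (i + 2 * m) := by
        gcongr
        exact h.le _
    _ = 2 * (y ^ (2 * m) / Q ^ m) * (y / Q) ^ i := by
        rw [pow_add, pow_add, div_pow, two_mul m, pow_add, pow_add]
        field_simp
    _ ≤ 2 * (y ^ (2 * m) / Q ^ m) * r ^ i := by
        gcongr
        rwa [div_le_iff₀ hQ]

lemma FriableWeights.mul_pow_le_of_add_eq (h : FriableWeights Q m a) (hQ : 0 < Q) (hy : 0 < y)
    (hyr : √Q ≤ r * y) {i j : ℕ} (hj : m < j) (hij : i + j = 2 * m) :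
    a j * y ^ j ≤ 2 * (y ^ (2 * m) / Q ^ m) * r ^ i := by
  have hs : 0 < √Q := Real.sqrt_pos.2 hQ
  calc a j * y ^ j ≤ 2 / √Q ^ j * y ^ j := by
        gcongr
        exact h.le_of_lt hj (by omega)
    _ = 2 * (y ^ (2 * m) / Q ^ m) * (√Q / y) ^ i := by
        rw [← Real.sq_sqrt hQ.le, Real.sqrt_sq hs.le, ← pow_mul, ← hij, div_pow, pow_add, pow_add]
        field_simp
    _ ≤ 2 * (y ^ (2 * m) / Q ^ m) * r ^ i := by
        gcongr
        rwa [div_le_iff₀ hy]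

lemma FriableWeights.natCast_mul_sub_permWeight_mul_pow_add_le (h : FriableWeights Q m a)
    (hm : 1 ≤ m) (hQ : 0 < Q) (hy : 0 < y) (hyr : y ≤ r * Q) (i : ℕ) :
    ((i + 2 * m : ℕ) : ℝ) * ((a (i + 2 * m) - permWeight m (i + 2 * m)) * y ^ (i + 2 * m)) ≤
      4 * m * (y ^ (2 * m) / Q ^ m) * (((i + 1).choose 1 : ℕ) * r ^ i) := by
  rw [permWeight_of_lt (by omega), sub_zero, Nat.choose_one_right]
  have hcast : ((i + 2 * m : ℕ) : ℝ) ≤ 2 * m * (i + 1 : ℕ) := by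
    exact_mod_cast (by nlinarith : i + 2 * m ≤ 2 * m * (i + 1))
  have ha := mul_nonneg (h.nonneg (i + 2 * m)) (pow_pos hy (i + 2 * m)).le
  calc _ ≤ (2 * m * (i + 1 : ℕ) : ℝ) * (2 * (y ^ (2 * m) / Q ^ m) * r ^ i) :=
        mul_le_mul hcast (h.mul_pow_add_two_mul_le hQ hy hyr i) ha (by positivity)
    _ = _ := by ring

lemma FriableWeights.summable_natCast_mul_sub_permWeight_mul_pow (h : FriableWeights Q m a)
    (hm : 1 ≤ m) (hQ : 0 < Q) (hy : 0 < y) (hr : 0 < r) (hr1 : r < 1) (hyr : y ≤ r * Q) :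
    Summable fun j : ℕ ↦ (j : ℝ) * ((a j - permWeight m j) * y ^ j) := by
  have hr' : ‖r‖ < 1 := by rwa [Real.norm_of_nonneg hr.le]
  rw [← summable_nat_add_iff (2 * m)]
  refine Summable.of_nonneg_of_le (fun i ↦ ?_)
    (h.natCast_mul_sub_permWeight_mul_pow_add_le hm hQ hy hyr)
    ((summable_choose_mul_geometric_of_norm_lt_one 1 hr').mul_left _)
  have := h.sub_permWeight_nonneg (i + 2 * m)
  positivity

lemma FriableWeights.sum_range_two_mul_natCast_mul_le (h : FriableWeights Q m a) (hQ : 0 < Q)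
    (hy : 0 < y) (hr : 0 < r) (hr1 : r < 1) (hQy : √Q ≤ r * y) :
    ∑ j ∈ Finset.range (2 * m), (j : ℝ) * ((a j - permWeight m j) * y ^ j) ≤
      4 * m * (y ^ (2 * m) / Q ^ m) * (1 - r)⁻¹ := by
  set W := y ^ (2 * m) / Q ^ m
  have hterm : ∀ j ∈ Finset.range (2 * m),
      (j : ℝ) * ((a j - permWeight m j) * y ^ j) ≤ 4 * m * W * r ^ (2 * m - 1 - j) := fun j hj ↦ by
    have hj := Finset.mem_range.1 hj
    rcases le_or_gt j m with hjm | hjm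
    · rw [h.sub_permWeight_of_le hjm, zero_mul, mul_zero]
      positivity
    have hgeom : a j * y ^ j ≤ 2 * W * r ^ (2 * m - 1 - j) := by
      refine (h.mul_pow_le_of_add_eq hQ hy hQy hjm (Nat.sub_add_cancel hj.le)).trans ?_
      gcongr 2 * W * ?_
      exact pow_le_pow_of_le_one hr.le hr1.le (by omega)
    rw [permWeight_of_lt hjm, sub_zero]
    calc _ ≤ ((2 * m : ℕ) : ℝ) * (2 * W * r ^ (2 * m - 1 - j)) :=
          mul_le_mul (Nat.cast_le.2 hj.le) hgeom
            (mul_nonneg (h.nonneg j) (by positivity)) (by positivity)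
      _ = _ := by push_cast; ring
  calc _ ≤ ∑ j ∈ Finset.range (2 * m), 4 * m * W * r ^ (2 * m - 1 - j) := Finset.sum_le_sum hterm
    _ = 4 * m * W * ∑ i ∈ Finset.range (2 * m), r ^ i := by
        rw [← Finset.mul_sum, Finset.sum_range_reflect]
    _ ≤ _ := by
        gcongr
        exact sum_le_hasSum _ (fun _ _ ↦ by positivity) (hasSum_geometric_of_lt_one hr.le hr1)

/-- In the range `√Q / r ≤ y ≤ r * Q` the terms decay geometrically on both sides of the index
`2 * m`. -/
theorem FriableWeights.tsum_natCast_mul_sub_permWeight_mul_pow_le (h : FriableWeights Q m a)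
    (hm : 1 ≤ m) (hQ : 0 < Q) (hy : 0 < y) (hr : 0 < r) (hr1 : r < 1) (hyr : y ≤ r * Q)
    (hQy : √Q ≤ r * y) :
    ∑' j : ℕ, (j : ℝ) * ((a j - permWeight m j) * y ^ j) ≤
      m * (8 / (1 - r) ^ 2 * (y ^ (2 * m) / Q ^ m)) := by
  have hr' : ‖r‖ < 1 := by rwa [Real.norm_of_nonneg hr.le]
  have hsum := h.summable_natCast_mul_sub_permWeight_mul_pow hm hQ hy hr hr1 hyr
  have hgeom := hasSum_choose_mul_geometric_of_norm_lt_one 1 hr'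
  have htail := ((summable_nat_add_iff (2 * m)).2 hsum).tsum_le_tsum
    (h.natCast_mul_sub_permWeight_mul_pow_add_le hm hQ hy hyr) (hgeom.summable.mul_left _)
  rw [tsum_mul_left, hgeom.tsum_eq] at htail
  have hinv : (1 - r)⁻¹ ≤ 1 / (1 - r) ^ (1 + 1) := by
    rw [← one_div]
    exact one_div_le_one_div_of_le (pow_pos (sub_pos.2 hr1) _)
      (pow_le_of_le_one (sub_nonneg.2 hr1.le) (by linarith) (by simp))
  rw [← hsum.sum_add_tsum_nat_add (2 * m)]
  refine (add_le_add (h.sum_range_two_mul_natCast_mul_le hQ hy hr hr1 hQy) htail).trans ?_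
  calc _ ≤ 4 * m * (y ^ (2 * m) / Q ^ m) * (1 / (1 - r) ^ (1 + 1)) +
        4 * m * (y ^ (2 * m) / Q ^ m) * (1 / (1 - r) ^ (1 + 1)) := by gcongr
    _ = _ := by ring

theorem FriableWeights.sub_sum_pow_le (h : FriableWeights Q m a) (hm : 1 ≤ m) (hQ : 0 < Q)
    (hy : 0 < y) (hr : 0 < r) (hr1 : r < 1) (hyr : y ≤ r * Q) (hQy : √Q ≤ r * y)
    (hN : HasSum (fun j ↦ a j * y ^ j) N) :
    N - ∑ j ∈ Finset.Icc 1 m, y ^ j ≤ 8 / (1 - r) ^ 2 * (y ^ (2 * m) / Q ^ m) := by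
  refine le_of_mul_le_mul_left ?_ (Nat.cast_pos.2 hm)
  refine (hasSum_le (fun j ↦ ?_) ((hasSum_sub_permWeight_mul_pow m hN).mul_left (m : ℝ))
    (h.summable_natCast_mul_sub_permWeight_mul_pow hm hQ hy hr hr1 hyr).hasSum).trans
    (h.tsum_natCast_mul_sub_permWeight_mul_pow_le hm hQ hy hr hr1 hyr hQy)
  rcases le_or_gt j m with hjm | hjm
  · simp [h.sub_permWeight_of_le hjm]
  · have := h.sub_permWeight_nonneg j
    gcongr

theorem FriableWeights.le_sub_sum_pow (h : FriableWeights Q m a) (hm : 1 ≤ m) (hy : 0 < y)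
    (hN : HasSum (fun j ↦ a j * y ^ j) N) :
    y ^ (2 * m) / Q ^ m ≤ N - ∑ j ∈ Finset.Icc 1 m, y ^ j := by
  calc y ^ (2 * m) / Q ^ m = (Q ^ m)⁻¹ * y ^ (2 * m) := by rw [inv_mul_eq_div]
    _ ≤ (a (2 * m) - permWeight m (2 * m)) * y ^ (2 * m) := by
        rw [permWeight_of_lt (by omega), sub_zero]
        gcongr
        exact h.inv_pow_le
    _ ≤ _ := le_hasSum (hasSum_sub_permWeight_mul_pow m hN) _ fun j _ ↦
        mul_nonneg (h.sub_permWeight_nonneg j) (by positivity)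

lemma FriableWeights.mul_pow_le (h : FriableWeights Q m a) (hQ : 0 < Q) (hy : 0 < y) {B : ℝ}
    (hB : 1 ≤ B) (hyB : y ^ (2 * m) / Q ^ m ≤ B) {j : ℕ} (hj : m < j) (hj2 : j ≤ 2 * m) :
    a j * y ^ j ≤ 2 * B := by
  have : 0 < √Q := Real.sqrt_pos.2 hQ
  calc a j * y ^ j ≤ 2 / √Q ^ j * y ^ j := by
        gcongr
        exact h.le_of_lt hj hj2
    _ = 2 * (y / √Q) ^ j := by rw [div_pow]; ring
    _ ≤ 2 * B := by
        gcongr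
        rcases le_total (y / √Q) 1 with h1 | h1
        · exact (pow_le_one₀ (by positivity) h1).trans hB
        · refine (pow_le_pow_right₀ h1 hj2).trans ?_
          rwa [div_pow, pow_mul √Q, Real.sq_sqrt hQ.le]

/-- Unlike `FriableWeights.sub_sum_pow_le` this needs no lower bound for `y`. -/
lemma FriableWeights.sub_sum_pow_le_of_le (h : FriableWeights Q m a) (hQ : 0 < Q)
    (hy : 0 < y) (hr : 0 < r) (hr1 : r < 1) (hyr : y ≤ r * Q) {B : ℝ} (hB : 1 ≤ B)
    (hyB : y ^ (2 * m) / Q ^ m ≤ B) (hN : HasSum (fun j ↦ a j * y ^ j) N) :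
    N - ∑ j ∈ Finset.Icc 1 m, y ^ j ≤ (4 * m + 2 / (1 - r)) * B := by
  have : 0 < 1 - r := sub_pos.2 hr1
  have hsum := hasSum_sub_permWeight_mul_pow m hN
  have hhead : ∑ j ∈ Finset.range (2 * m), (a j - permWeight m j) * y ^ j ≤ 4 * m * B := by
    calc _ ≤ ∑ j ∈ Finset.range (2 * m), 2 * B := Finset.sum_le_sum fun j hj ↦ by
          rcases le_or_gt j m with hjm | hjm
          · rw [h.sub_permWeight_of_le hjm, zero_mul]
            positivity
          · rw [permWeight_of_lt hjm, sub_zero]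
            exact h.mul_pow_le hQ hy hB hyB hjm (Finset.mem_range.1 hj).le
      _ = 4 * m * B := by simp; ring
  have htail : ∑' i, (a (i + 2 * m) - permWeight m (i + 2 * m)) * y ^ (i + 2 * m) ≤
      2 / (1 - r) * B := by
    have hgeom := (hasSum_geometric_of_lt_one hr.le hr1).mul_left (2 * B)
    calc _ ≤ 2 * B * (1 - r)⁻¹ := by
          refine hasSum_le (fun i ↦ ?_)
            ((summable_nat_add_iff (2 * m)).2 hsum.summable).hasSum hgeom
          refine (mul_le_mul_of_nonneg_right (sub_le_self _ (permWeight_nonneg _ _))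
            (by positivity)).trans ((h.mul_pow_add_two_mul_le hQ hy hyr i).trans ?_)
          gcongr
      _ = 2 / (1 - r) * B := by ring
  rw [← hsum.tsum_eq, ← hsum.summable.sum_add_tsum_nat_add (2 * m), add_mul]
  exact add_le_add hhead htail

end FriableWeights

section SaddleDefect

variable {x y : ℝ} {m : ℕ}

lemma sq_one_sub_exp_neg_le {u : ℝ} (hu : 0 ≤ u) :
    (1 - Real.exp (-u)) ^ 2 ≤ 2 * (Real.exp (-u) - 1 + u) := by
  have hv : 0 ≤ 1 - Real.exp (-u) := sub_nonneg.2 (Real.exp_le_one_iff.2 (neg_nonpos.2 hu))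
  have hlog := Real.hasSum_pow_div_log_of_abs_lt_one (x := 1 - Real.exp (-u))
    (by rw [abs_of_nonneg hv]; linarith [Real.exp_pos (-u)])
  rw [sub_sub_cancel, Real.log_exp, neg_neg] at hlog
  have htwo := sum_le_hasSum (Finset.range 2) (fun _ _ ↦ by positivity) hlog
  rw [Finset.sum_range_succ, Finset.sum_range_one] at htwo
  norm_num at htwo
  linarith

lemma exp_neg_sub_one_add_le (u : ℝ) : Real.exp (-u) - 1 + u ≤ u * (1 - Real.exp (-u)) := by
  have h : (u + 1) * Real.exp (-u) ≤ 1 := by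
    rw [Real.exp_neg, ← div_eq_mul_inv, div_le_one (Real.exp_pos u)]
    exact Real.add_one_le_exp u
  linarith

/-- The logarithm of the ratio of the values of `z ↦ exp (∑_{j ≤ m} z ^ j / j) * z ^ (-n)` at `y`
and at its saddle point `x`, where `n = ∑_{j ≤ m} x ^ j`. -/
noncomputable def saddleDefect (m : ℕ) (x y : ℝ) : ℝ :=
  ∑ j ∈ Finset.Icc 1 m, y ^ j / j - ∑ j ∈ Finset.Icc 1 m, x ^ j / j +
    (∑ j ∈ Finset.Icc 1 m, x ^ j) * Real.log (x / y)

lemma pow_eq_pow_mul_exp_neg_log (hx : 0 < x) (hy : 0 < y) (j : ℕ) :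
    y ^ j = x ^ j * Real.exp (-(j * Real.log (x / y))) := by
  rw [← mul_neg, Real.exp_nat_mul, Real.exp_neg, Real.exp_log (by positivity), ← mul_pow, inv_div,
    mul_div_cancel₀ _ hx.ne']

lemma saddleDefect_eq_sum (hx : 0 < x) (hy : 0 < y) :
    saddleDefect m x y = ∑ j ∈ Finset.Icc 1 m, x ^ j / j *
      (Real.exp (-(j * Real.log (x / y))) - 1 + j * Real.log (x / y)) := by
  rw [saddleDefect, ← Finset.sum_sub_distrib, Finset.sum_mul, ← Finset.sum_add_distrib]
  refine Finset.sum_congr rfl fun j hj ↦ ?_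
  have : (0 : ℝ) < j := Nat.cast_pos.2 (Finset.mem_Icc.1 hj).1
  rw [pow_eq_pow_mul_exp_neg_log hx hy j]
  field_simp

lemma sum_pow_sub_sum_pow_eq (hx : 0 < x) (hy : 0 < y) :
    ∑ j ∈ Finset.Icc 1 m, x ^ j - ∑ j ∈ Finset.Icc 1 m, y ^ j =
      ∑ j ∈ Finset.Icc 1 m, x ^ j * (1 - Real.exp (-(j * Real.log (x / y)))) := by
  rw [← Finset.sum_sub_distrib]
  exact Finset.sum_congr rfl fun j _ ↦ by rw [pow_eq_pow_mul_exp_neg_log hx hy j]; ring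

lemma log_div_nonneg (hy : 0 < y) (hyx : y ≤ x) : 0 ≤ Real.log (x / y) :=
  Real.log_nonneg ((one_le_div hy).2 hyx)

theorem sq_sum_pow_sub_le_mul_saddleDefect (hy : 0 < y) (hyx : y ≤ x) :
    (∑ j ∈ Finset.Icc 1 m, x ^ j - ∑ j ∈ Finset.Icc 1 m, y ^ j) ^ 2 ≤
      2 * m * (∑ j ∈ Finset.Icc 1 m, x ^ j) * saddleDefect m x y := by
  have hx := hy.trans_le hyx
  have ht := log_div_nonneg hy hyx
  rw [saddleDefect_eq_sum hx hy, sum_pow_sub_sum_pow_eq hx hy]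
  set t := Real.log (x / y)
  have hterm : ∀ j ∈ Finset.Icc 1 m, x ^ j * (1 - Real.exp (-(j * t))) ^ 2 ≤
      2 * m * (x ^ j / j * (Real.exp (-(j * t)) - 1 + j * t)) := fun j hj ↦ by
    obtain ⟨hj1, hjm⟩ := Finset.mem_Icc.1 hj
    have hj0 : (0 : ℝ) < j := Nat.cast_pos.2 hj1
    have hq := sq_one_sub_exp_neg_le (mul_nonneg hj0.le ht)
    have hq0 : 0 ≤ Real.exp (-(j * t)) - 1 + j * t := by
      linarith [sq_nonneg (1 - Real.exp (-(j * t)))]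
    calc _ ≤ x ^ j * (2 * (Real.exp (-(j * t)) - 1 + j * t)) := by gcongr
      _ = 2 * j * (x ^ j / j * (Real.exp (-(j * t)) - 1 + j * t)) := by field_simp
      _ ≤ _ := by gcongr
  calc _ ≤ (∑ j ∈ Finset.Icc 1 m, x ^ j) *
        ∑ j ∈ Finset.Icc 1 m, x ^ j * (1 - Real.exp (-(j * t))) ^ 2 :=
        Finset.sum_sq_le_sum_mul_sum_of_sq_le_mul _ (fun _ _ ↦ by positivity)
          (fun _ _ ↦ by positivity) fun _ _ ↦ by rw [mul_pow, sq, mul_assoc]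
    _ ≤ (∑ j ∈ Finset.Icc 1 m, x ^ j) *
        ∑ j ∈ Finset.Icc 1 m, 2 * m * (x ^ j / j * (Real.exp (-(j * t)) - 1 + j * t)) :=
        mul_le_mul_of_nonneg_left (Finset.sum_le_sum hterm) (by positivity)
    _ = _ := by rw [← Finset.mul_sum]; ring

lemma saddleDefect_le_log_mul (hx : 0 < x) (hy : 0 < y) :
    saddleDefect m x y ≤ Real.log (x / y) *
      (∑ j ∈ Finset.Icc 1 m, x ^ j - ∑ j ∈ Finset.Icc 1 m, y ^ j) := by
  rw [saddleDefect_eq_sum hx hy, sum_pow_sub_sum_pow_eq hx hy, Finset.mul_sum]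
  refine Finset.sum_le_sum fun j hj ↦ ?_
  have hj0 : (0 : ℝ) < j := Nat.cast_pos.2 (Finset.mem_Icc.1 hj).1
  calc _ ≤ x ^ j / j * (j * Real.log (x / y) * (1 - Real.exp (-(j * Real.log (x / y))))) := by
        gcongr
        exact exp_neg_sub_one_add_le _
    _ = _ := by field_simp

lemma mul_log_mul_pow_le (hm : 1 ≤ m) (hy : 0 < y) (hyx : y ≤ x) :
    m * Real.log (x / y) * y ^ m ≤
      ∑ j ∈ Finset.Icc 1 m, x ^ j - ∑ j ∈ Finset.Icc 1 m, y ^ j := by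
  have hx := hy.trans_le hyx
  calc m * Real.log (x / y) * y ^ m ≤ ((x / y) ^ m - 1) * y ^ m := by
        gcongr
        rw [← Real.log_pow]
        exact Real.log_le_sub_one_of_pos (by positivity)
    _ = x ^ m - y ^ m := by rw [div_pow]; field_simp
    _ ≤ ∑ j ∈ Finset.Icc 1 m, (x ^ j - y ^ j) :=
        Finset.single_le_sum (f := fun j ↦ x ^ j - y ^ j)
          (fun j _ ↦ sub_nonneg.2 (pow_le_pow_left₀ hy.le hyx j)) (Finset.right_mem_Icc.2 hm)
    _ = _ := Finset.sum_sub_distrib _ _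

theorem saddleDefect_le_sq_sum_pow_sub_div (hm : 1 ≤ m) (hy : 0 < y) (hyx : y ≤ x) :
    saddleDefect m x y ≤
      (∑ j ∈ Finset.Icc 1 m, x ^ j - ∑ j ∈ Finset.Icc 1 m, y ^ j) ^ 2 / (m * y ^ m) := by
  have : (0 : ℝ) < m := Nat.cast_pos.2 hm
  have hR : 0 ≤ ∑ j ∈ Finset.Icc 1 m, x ^ j - ∑ j ∈ Finset.Icc 1 m, y ^ j :=
    sub_nonneg.2 (Finset.sum_le_sum fun j _ ↦ pow_le_pow_left₀ hy.le hyx j)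
  have ht : Real.log (x / y) ≤
      (∑ j ∈ Finset.Icc 1 m, x ^ j - ∑ j ∈ Finset.Icc 1 m, y ^ j) / (m * y ^ m) := by
    rw [le_div_iff₀ (by positivity)]
    linarith [mul_log_mul_pow_le hm hy hyx]
  refine (saddleDefect_le_log_mul (hy.trans_le hyx) hy).trans ?_
  rw [sq, mul_div_right_comm]
  gcongr

lemma exists_sum_pow_eq (hm : 1 ≤ m) {N : ℝ} (hN : 0 < N) :
    ∃ x : ℝ, 0 < x ∧ ∑ j ∈ Finset.Icc 1 m, x ^ j = N := by
  have hcont : ContinuousOn (fun x : ℝ ↦ ∑ j ∈ Finset.Icc 1 m, x ^ j) (Set.Icc 0 N) := by fun_prop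
  have hzero : ∑ j ∈ Finset.Icc 1 m, (0 : ℝ) ^ j = 0 := Finset.sum_eq_zero fun j hj ↦
    zero_pow (Nat.one_le_iff_ne_zero.1 (Finset.mem_Icc.1 hj).1)
  have hle : N ≤ ∑ j ∈ Finset.Icc 1 m, N ^ j := by
    simpa using Finset.single_le_sum (f := fun j : ℕ ↦ N ^ j) (fun j _ ↦ by positivity)
      (Finset.left_mem_Icc.2 hm)
  obtain ⟨x, hx, hxN⟩ := intermediate_value_Icc hN.le hcont ⟨hzero.trans_le hN.le, hle⟩
  refine ⟨x, hx.1.lt_of_ne ?_, hxN⟩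
  rintro rfl
  exact hN.ne (hzero.symm.trans hxN)

lemma FriableWeights.le_of_sum_pow_eq {Q N : ℝ} {a : ℕ → ℝ} (h : FriableWeights Q m a)
    (hm : 1 ≤ m) (hy : 0 < y) (hN : HasSum (fun j ↦ a j * y ^ j) N) (hx : 0 < x)
    (hxN : ∑ j ∈ Finset.Icc 1 m, x ^ j = N) : y ≤ x := by
  by_contra! hxy
  have hle : 0 ≤ N - ∑ j ∈ Finset.Icc 1 m, y ^ j :=
    (hasSum_sub_permWeight_mul_pow m hN).nonneg fun j ↦
      mul_nonneg (h.sub_permWeight_nonneg j) (by positivity)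
  have hlt : ∑ j ∈ Finset.Icc 1 m, x ^ j < ∑ j ∈ Finset.Icc 1 m, y ^ j :=
    Finset.sum_lt_sum_of_nonempty ⟨1, Finset.left_mem_Icc.2 hm⟩ fun j hj ↦
      pow_lt_pow_left₀ hxy hx.le (Nat.one_le_iff_ne_zero.1 (Finset.mem_Icc.1 hj).1)
  linarith

end SaddleDefect

section SaddlePoint

variable {Q ε r y : ℝ} {n m : ℕ} {a : ℕ → ℝ}

/-- The range `(1 + ε) log n / log Q ≤ m ≤ (2 - ε) log n / log Q`. -/
structure FriableRange (Q ε : ℝ) (n m : ℕ) : Prop where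
  ge : (1 + ε) * Real.log n / Real.log Q ≤ m
  le : m ≤ (2 - ε) * Real.log n / Real.log Q

lemma FriableRange.rpow_le_pow (h : FriableRange Q ε n m) (hQ : 1 < Q) (hn : 0 < n) :
    (n : ℝ) ^ (1 + ε) ≤ Q ^ m := by
  have hge := h.ge
  have hn0 : (0 : ℝ) < n := Nat.cast_pos.2 hn
  rw [div_le_iff₀ (Real.log_pos hQ)] at hge
  rwa [← Real.log_le_log_iff (by positivity) (by positivity), Real.log_rpow hn0, Real.log_pow]

lemma FriableRange.pow_le_rpow (h : FriableRange Q ε n m) (hQ : 1 < Q) (hn : 0 < n) :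
    Q ^ m ≤ (n : ℝ) ^ (2 - ε) := by
  have hle := h.le
  have hn0 : (0 : ℝ) < n := Nat.cast_pos.2 hn
  rw [le_div_iff₀ (Real.log_pos hQ)] at hle
  rwa [← Real.log_le_log_iff (by positivity) (by positivity), Real.log_rpow hn0, Real.log_pow]

lemma FriableRange.sq_div_pow_le (h : FriableRange Q ε n m) (hQ : 1 < Q) (hn : 0 < n) :
    (n : ℝ) ^ 2 / Q ^ m ≤ (n : ℝ) ^ (1 - ε) := by
  have hn0 : (0 : ℝ) < n := Nat.cast_pos.2 hn
  rw [div_le_iff₀ (by positivity)]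
  calc (n : ℝ) ^ 2 = (n : ℝ) ^ (1 - ε) * (n : ℝ) ^ (1 + ε) := by
        rw [← Real.rpow_add hn0, ← Real.rpow_natCast]
        norm_num
    _ ≤ _ := by
        gcongr
        exact h.rpow_le_pow hQ hn

lemma eventually_two_le_of_friableRange (hQ : 1 < Q) (hε : 0 < ε) :
    ∀ᶠ n : ℕ in atTop, ∀ m, FriableRange Q ε n m → 2 ≤ m := by
  have hlog := (Real.tendsto_log_atTop.comp tendsto_natCast_atTop_atTop).eventually_ge_atTop
    (2 * Real.log Q)
  filter_upwards [hlog] with n hn m h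
  have hL := Real.log_pos hQ
  have hge := h.ge
  rw [div_le_iff₀ hL] at hge
  have : 0 ≤ Real.log n := Real.log_natCast_nonneg n
  have h2 : (2 : ℝ) * Real.log Q ≤ m * Real.log Q := by
    simp only [Function.comp_apply] at hn
    nlinarith
  exact_mod_cast le_of_mul_le_mul_right h2 hL

lemma eventually_mul_le_rpow_of_friableRange {A s : ℝ} (hA : 0 ≤ A) (hs : 0 < s) :
    ∀ᶠ n : ℕ in atTop, ∀ m, FriableRange Q ε n m → A * m ≤ (n : ℝ) ^ s := by
  have hlog := ((isLittleO_log_rpow_atTop hs).const_mul_left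
    (A * ((2 - ε) / Real.log Q))).comp_tendsto tendsto_natCast_atTop_atTop
  filter_upwards [hlog.bound one_pos] with n hn m h
  rw [one_mul, Function.comp_apply, Function.comp_apply,
    Real.norm_of_nonneg (Real.rpow_nonneg n.cast_nonneg s)] at hn
  calc A * m ≤ A * ((2 - ε) * Real.log n / Real.log Q) := mul_le_mul_of_nonneg_left h.le hA
    _ = A * ((2 - ε) / Real.log Q) * Real.log n := by ring
    _ ≤ _ := (le_abs_self _).trans hn

/-- The size of the saddle point `y` of the weights `FriableWeights Q m a`: it lies between `√Q`
and `Q`, away from both ends, and `y ^ m` is comparable to `n`. -/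
structure SaddleBounds (Q r : ℝ) (n m : ℕ) (y : ℝ) : Prop where
  pos : 0 < y
  le_mul : y ≤ r * Q
  sqrt_le_mul : √Q ≤ r * y
  mul_le_pow : (1 - r) / 2 * n ≤ y ^ m
  pow_le : y ^ m ≤ n

lemma one_sub_mul_sum_pow_le (hy : 0 < y) (hry : 1 ≤ r * y) (m : ℕ) :
    (1 - r) * ∑ j ∈ Finset.Icc 1 m, y ^ j ≤ y ^ m := by
  induction m with
  | zero => simp
  | succ k ih =>
    have hk : y ^ k ≤ r * y ^ (k + 1) := by
      rw [pow_succ]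
      nlinarith [pow_pos hy k]
    rw [Finset.sum_Icc_succ_top (by omega), mul_add]
    linarith

lemma rpow_neg_lt_one (hQ : 1 < Q) (hε : 0 < ε) : Q ^ (-ε / 8) < 1 :=
  Real.rpow_lt_one_of_one_lt_of_neg hQ (by linarith)

lemma FriableRange.le_rpow_mul (h : FriableRange Q ε n m) (hQ : 1 < Q) (hε : 0 < ε)
    (hε1 : ε ≤ 1) (hn : 1 ≤ n) (hm : m ≠ 0) (hy : 0 < y) (hyn : y ^ m ≤ n) :
    y ≤ Q ^ (-ε / 8) * Q := by
  have hQ0 : 0 < Q := one_pos.trans hQ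
  have hn1 : (1 : ℝ) ≤ n := Nat.one_le_cast.2 hn
  refine (pow_le_pow_iff_left₀ hy.le (by positivity) hm).1 (hyn.trans ?_)
  calc (n : ℝ) ≤ (n : ℝ) ^ ((1 + ε) * (1 - ε / 8)) :=
        Real.self_le_rpow_of_one_le hn1 (by nlinarith)
    _ = ((n : ℝ) ^ (1 + ε)) ^ (1 - ε / 8) := Real.rpow_mul n.cast_nonneg _ _
    _ ≤ (Q ^ m) ^ (1 - ε / 8) := by
        gcongr
        · linarith
        · exact h.rpow_le_pow hQ hn
    _ = (Q ^ (-ε / 8) * Q) ^ m := by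
        rw [← Real.rpow_add_one hQ0.ne', ← Real.rpow_natCast, ← Real.rpow_natCast,
          ← Real.rpow_mul hQ0.le, ← Real.rpow_mul hQ0.le]
        ring_nf

lemma FriableRange.sqrt_le_rpow_mul (h : FriableRange Q ε n m) (hQ : 1 < Q) (hε : 0 < ε)
    (hn : 1 ≤ n) (hm : m ≠ 0) (hy : 0 < y) (hyn : (n : ℝ) ^ (1 - ε / 4) ≤ y ^ m) :
    √Q ≤ Q ^ (-ε / 8) * y := by
  have hQ0 : 0 < Q := one_pos.trans hQ
  have hn1 : (1 : ℝ) ≤ n := Nat.one_le_cast.2 hn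
  have hpow : (Q ^ (1 / 2 + ε / 8)) ^ m ≤ y ^ m := by
    calc (Q ^ (1 / 2 + ε / 8)) ^ m = (Q ^ m) ^ (1 / 2 + ε / 8) := Real.rpow_pow_comm hQ0.le _ _
      _ ≤ ((n : ℝ) ^ (2 - ε)) ^ (1 / 2 + ε / 8) := by
          gcongr
          exact h.pow_le_rpow hQ hn
      _ = (n : ℝ) ^ ((2 - ε) * (1 / 2 + ε / 8)) := (Real.rpow_mul n.cast_nonneg _ _).symm
      _ ≤ (n : ℝ) ^ (1 - ε / 4) := Real.rpow_le_rpow_of_exponent_le hn1 (by nlinarith)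
      _ ≤ y ^ m := hyn
  calc √Q = Q ^ (-ε / 8) * Q ^ (1 / 2 + ε / 8) := by
        rw [Real.sqrt_eq_rpow, ← Real.rpow_add hQ0]
        ring_nf
    _ ≤ _ := by
        gcongr
        exact (pow_le_pow_iff_left₀ (by positivity) hy.le hm).1 hpow

lemma FriableWeights.half_le_sum_pow (h : FriableWeights Q m a) (hnm : FriableRange Q ε n m)
    (hQ : 1 < Q) (hε : 0 < ε) (hε1 : ε ≤ 1) (hn : 1 ≤ n) (hm : 1 ≤ m)
    (hmn : (8 + 4 / (1 - Q ^ (-ε / 8))) * m ≤ (n : ℝ) ^ ε) (hy : 0 < y)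
    (hsum : HasSum (fun j ↦ a j * y ^ j) n) : (n : ℝ) / 2 ≤ ∑ j ∈ Finset.Icc 1 m, y ^ j := by
  have hQ0 : 0 < Q := one_pos.trans hQ
  have hn1 : (1 : ℝ) ≤ n := Nat.one_le_cast.2 hn
  have hr1 := rpow_neg_lt_one hQ hε
  have hyn := h.pow_le hm hy.le hsum
  have hyB : y ^ (2 * m) / Q ^ m ≤ (n : ℝ) ^ (1 - ε) :=
    le_trans (by rw [mul_comm 2 m, pow_mul]; gcongr) (hnm.sq_div_pow_le hQ hn)
  have hdiff := h.sub_sum_pow_le_of_le hQ0 hy (by positivity) hr1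
    (hnm.le_rpow_mul hQ hε hε1 hn (by omega) hy hyn) (Real.one_le_rpow hn1 (by linarith)) hyB hsum
  have hcoef : 4 * m + 2 / (1 - Q ^ (-ε / 8)) ≤ (n : ℝ) ^ ε / 2 := by
    have : 4 / (1 - Q ^ (-ε / 8)) ≤ 4 / (1 - Q ^ (-ε / 8)) * m :=
      le_mul_of_one_le_right (div_nonneg (by simp) (by linarith)) (Nat.one_le_cast.2 hm)
    linear_combination this / 2 + hmn / 2
  have hhalf : (4 * m + 2 / (1 - Q ^ (-ε / 8))) * (n : ℝ) ^ (1 - ε) ≤ n / 2 := by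
    calc _ ≤ (n : ℝ) ^ ε / 2 * (n : ℝ) ^ (1 - ε) := by gcongr
      _ = (n : ℝ) ^ (ε + (1 - ε)) / 2 := by rw [Real.rpow_add (by linarith)]; ring
      _ = n / 2 := by rw [add_sub_cancel, Real.rpow_one]
  linarith

lemma sum_pow_le_mul_max (hy : 0 < y) (m : ℕ) :
    ∑ j ∈ Finset.Icc 1 m, y ^ j ≤ m * max 1 (y ^ m) := by
  calc _ ≤ ∑ j ∈ Finset.Icc 1 m, max 1 (y ^ m) := Finset.sum_le_sum fun j hj ↦ by
        rcases le_total y 1 with h1 | h1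
        · exact le_max_of_le_left (pow_le_one₀ hy.le h1)
        · exact le_max_of_le_right (pow_le_pow_right₀ h1 (Finset.mem_Icc.1 hj).2)
    _ = _ := by simp

lemma rpow_le_pow_of_half_le_sum_pow {s : ℝ} (hs1 : s < 1) (hn : 1 < n)
    (hmn : 2 * m ≤ (n : ℝ) ^ s) (hy : 0 < y)
    (hsum : (n : ℝ) / 2 ≤ ∑ j ∈ Finset.Icc 1 m, y ^ j) : (n : ℝ) ^ (1 - s) ≤ y ^ m := by
  have hn1 : (1 : ℝ) < n := Nat.one_lt_cast.2 hn
  have hmax : (n : ℝ) ^ (1 - s) ≤ max 1 (y ^ m) := by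
    rw [Real.rpow_sub (by linarith), Real.rpow_one, div_le_iff₀' (by positivity)]
    calc (n : ℝ) ≤ 2 * m * max 1 (y ^ m) := by linarith [sum_pow_le_mul_max hy m]
      _ ≤ _ := by gcongr
  exact (le_max_iff.1 hmax).resolve_left (Real.one_lt_rpow hn1 (by linarith)).not_ge

theorem eventually_saddleBounds (hQ : 1 < Q) (hε : 0 < ε) (hε1 : ε ≤ 1) :
    ∀ᶠ n : ℕ in atTop, ∀ m, FriableRange Q ε n m → ∀ a y, FriableWeights Q m a → 0 < y →
      HasSum (fun j ↦ a j * y ^ j) n → SaddleBounds Q (Q ^ (-ε / 8)) n m y := by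
  have hr1 := rpow_neg_lt_one hQ hε
  have hA : 0 ≤ 8 + 4 / (1 - Q ^ (-ε / 8)) :=
    add_nonneg (by simp) (div_nonneg (by simp) (by linarith))
  filter_upwards [eventually_two_le_of_friableRange hQ hε,
    eventually_mul_le_rpow_of_friableRange hA hε,
    eventually_mul_le_rpow_of_friableRange zero_le_two (s := ε / 4) (by linarith),
    eventually_gt_atTop 1] with n hm2 hmε hmε4 hn m hnm a y h hy hsum
  have hm : 1 ≤ m := one_le_two.trans (hm2 m hnm)
  have hyn := h.pow_le hm hy.le hsum
  have hhalf := h.half_le_sum_pow hnm hQ hε hε1 hn.le hm (hmε m hnm) hy hsum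
  have hsqrt := hnm.sqrt_le_rpow_mul hQ hε hn.le (by omega) hy
    (rpow_le_pow_of_half_le_sum_pow (by linarith) hn (hmε4 m hnm) hy hhalf)
  have hgeom := one_sub_mul_sum_pow_le hy ((Real.one_le_sqrt.2 hQ.le).trans hsqrt) m
  refine ⟨hy, hnm.le_rpow_mul hQ hε hε1 hn.le (by omega) hy hyn, hsqrt, ?_, hyn⟩
  calc _ = (1 - Q ^ (-ε / 8)) * (n / 2) := by ring
    _ ≤ _ := mul_le_mul_of_nonneg_left hhalf (by linarith)
    _ ≤ _ := hgeom

end SaddlePoint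

section IntegralComparison

variable {Q ε r x y η κ A D T : ℝ} {n m : ℕ} {a : ℕ → ℝ}

lemma FriableWeights.natCast_mul_abs_sub_eq (h : FriableWeights Q m a) (hy : 0 < y)
    (hyx : y ≤ x) (j : ℕ) :
    (j : ℝ) * |a j * y ^ j - permWeight m j * x ^ j| =
      permWeight m j * (j * (x ^ j - y ^ j)) + j * ((a j - permWeight m j) * y ^ j) := by
  have hpow : y ^ j ≤ x ^ j := pow_le_pow_left₀ hy.le hyx j
  rcases le_or_gt j m with hj | hj
  · rw [sub_eq_zero.1 (h.sub_permWeight_of_le hj), sub_self, zero_mul, mul_zero, add_zero,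
      ← mul_sub, abs_mul, abs_of_nonneg (permWeight_nonneg m j), abs_sub_comm,
      abs_of_nonneg (sub_nonneg.2 hpow)]
    ring
  · rw [permWeight_of_lt hj, zero_mul, zero_mul, sub_zero, sub_zero, zero_add,
      abs_of_nonneg (mul_nonneg (h.nonneg j) (by positivity))]

lemma sum_mul_le_mul_of_sum_eq {f : ℕ → ℝ} {B N : ℝ} (hf : ∀ j ∈ Finset.Icc 1 m, 0 ≤ f j)
    {c : ℕ → ℝ} (hc : ∀ j ∈ Finset.Icc 1 m, c j ≤ B) (hN : ∑ j ∈ Finset.Icc 1 m, f j = N) :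
    ∑ j ∈ Finset.Icc 1 m, c j * f j ≤ B * N := by
  rw [← hN, Finset.mul_sum]
  exact Finset.sum_le_sum fun j hj ↦ mul_le_mul_of_nonneg_right (hc j hj) (hf j hj)

lemma SaddleBounds.pow_two_mul_le (hy : SaddleBounds Q r n m y) : y ^ (2 * m) ≤ (n : ℝ) ^ 2 := by
  rw [mul_comm 2 m, pow_mul]
  exact pow_le_pow_left₀ (pow_pos hy.pos m).le hy.pow_le 2

lemma SaddleBounds.mul_le_pow_of_eq_or (hy : SaddleBounds Q r n m y) (hQ : 1 < Q)
    (hr1 : r < 1) {k : ℕ} (hk : k = m ∨ k + 1 = m) : (1 - r) / 2 / Q * n ≤ y ^ k := by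
  have hyQ : y ≤ Q := hy.le_mul.trans (mul_le_of_le_one_left (by linarith) hr1.le)
  have hyk := pow_pos hy.pos k
  rw [div_mul_eq_mul_div, div_le_iff₀ (one_pos.trans hQ)]
  refine hy.mul_le_pow.trans ?_
  rcases hk with rfl | rfl
  · exact le_mul_of_one_le_right hyk.le hQ.le
  · rw [pow_succ]
    gcongr

/-- The weights `a j * y ^ j` and `permWeight m j * x ^ j` at the two saddle points are close in
the norm controlling `norm_centredExponent_sub_le`. -/
lemma FriableWeights.exists_hasSum_mul_abs_sub (h : FriableWeights Q m a) (hQ : 1 < Q)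
    (hr : 0 < r) (hr1 : r < 1) (hm : 1 ≤ m) (hy : SaddleBounds Q r n m y) (hyx : y ≤ x)
    (hxn : ∑ j ∈ Finset.Icc 1 m, x ^ j = n) (hyn : HasSum (fun j ↦ a j * y ^ j) n) :
    ∃ D, HasSum (fun j : ℕ ↦ (j : ℝ) * |a j * y ^ j - permWeight m j * x ^ j|) D ∧
      D ≤ m * (16 / (1 - r) ^ 2 * (n ^ 2 / Q ^ m)) := by
  have hQ0 : 0 < Q := one_pos.trans hQ
  have hsum := (hasSum_permWeight_mul m (fun j : ℕ ↦ (j : ℝ) * (x ^ j - y ^ j))).add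
    (h.summable_natCast_mul_sub_permWeight_mul_pow hm hQ0 hy.pos hr hr1 hy.le_mul).hasSum
  simp only [← h.natCast_mul_abs_sub_eq hy.pos hyx] at hsum
  refine ⟨_, hsum, ?_⟩
  set W := y ^ (2 * m) / Q ^ m
  have hhead : ∑ j ∈ Finset.Icc 1 m, (j : ℝ) * (x ^ j - y ^ j) ≤ m * (8 / (1 - r) ^ 2 * W) := by
    calc _ ≤ (m : ℝ) * (n - ∑ j ∈ Finset.Icc 1 m, y ^ j) :=
          sum_mul_le_mul_of_sum_eq (fun j _ ↦ sub_nonneg.2 (pow_le_pow_left₀ hy.pos.le hyx j))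
            (fun j hj ↦ Nat.cast_le.2 (Finset.mem_Icc.1 hj).2)
            (by rw [Finset.sum_sub_distrib, hxn])
      _ ≤ _ := by
          gcongr
          exact h.sub_sum_pow_le hm hQ0 hy.pos hr hr1 hy.le_mul hy.sqrt_le_mul hyn
  have htail := h.tsum_natCast_mul_sub_permWeight_mul_pow_le hm hQ0 hy.pos hr hr1 hy.le_mul
    hy.sqrt_le_mul
  calc _ ≤ m * (8 / (1 - r) ^ 2 * W) + m * (8 / (1 - r) ^ 2 * W) := add_le_add hhead htail
    _ = m * (16 / (1 - r) ^ 2 * W) := by ring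
    _ ≤ _ := by
        gcongr _ * (_ * ?_)
        exact div_le_div_of_nonneg_right hy.pow_two_mul_le (by positivity)

/-- `T` separates the central arc `|θ| ≤ T`, where exponents with second and third order
coefficients `V` and `M` are compared up to `D`, from the tails `T ≤ |θ| ≤ π`, where they are
small at rate `K`. -/
structure IsCutoff (V M D K η T : ℝ) : Prop where
  nonneg : 0 ≤ T
  le_pi : T ≤ π
  one_le_sq_mul : 1 ≤ T ^ 2 * V
  cube_mul_le : T ^ 3 * M ≤ 1
  sq_mul_le : 2 * T ^ 2 * D ≤ η
  exp_le : 2 * π * Real.exp (-(K * (T ^ 2 / π ^ 2))) ≤ η * (√V)⁻¹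

lemma norm_integral_exp_centredExponent_sub_le {b b' : ℕ → ℝ} (hb : Summable b)
    (hb' : Summable b') (hb0 : ∀ j, 0 ≤ b j) (hb0' : ∀ j, 0 ≤ b' j) {V₀ V M₀ M D₀ K : ℝ}
    (hV₀ : HasSum (fun j : ℕ ↦ (j : ℝ) * b j) V₀) (hV₀V : V₀ ≤ V) (hV : 0 < V)
    (hM₀ : HasSum (fun j : ℕ ↦ (j : ℝ) ^ 2 * b j) M₀) (hM₀M : M₀ ≤ M)
    (hD₀ : HasSum (fun j : ℕ ↦ (j : ℝ) * |b' j - b j|) D₀) (hD₀D : D₀ ≤ D) (hm : 2 ≤ m)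
    (hK : 0 ≤ K) (hKb : ∀ k, k = m ∨ k + 1 = m → K ≤ b k ∧ K ≤ b' k) (hη : η ≤ 1 / 4)
    (hT : IsCutoff V M D (K / m) η T) :
    ‖(∫ θ in (-π)..π, Complex.exp (centredExponent b' θ)) -
        ∫ θ in (-π)..π, Complex.exp (centredExponent b θ)‖ ≤
      16 * η * ‖∫ θ in (-π)..π, Complex.exp (centredExponent b θ)‖ := by
  have hKm := hKb m (.inl rfl)
  have hKm' := hKb (m - 1) (.inr (by omega))
  have htail {θ : ℝ} (hθ : T ≤ |θ|) : K / m * (T ^ 2 / π ^ 2) ≤ K / m * (θ ^ 2 / π ^ 2) := by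
    rw [← sq_abs θ]
    have := hT.nonneg
    gcongr
  refine norm_integral_exp_sub_le_of_laplace (continuousOn_centredExponent hb π)
    (continuousOn_centredExponent hb' π) hT.nonneg hT.le_pi hV (fun θ ↦ ?_) hT.one_le_sq_mul
    (fun θ hθ ↦ ?_) (fun θ hθ ↦ ?_) hη
    (fun θ hTθ hθ ↦ (re_centredExponent_le hb hb0 hm hK hKm.1 hKm'.1 hθ).trans
      (neg_le_neg (htail hTθ)))
    (fun θ hTθ hθ ↦ (re_centredExponent_le hb' hb0' hm hK hKm.2 hKm'.2 hθ).trans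
      (neg_le_neg (htail hTθ))) hT.exp_le
  · refine le_trans ?_ (le_re_centredExponent hb hb0 hV₀ θ)
    gcongr
  · have hθ := abs_le.2 hθ
    have : 0 ≤ M₀ := hM₀.nonneg fun j ↦ mul_nonneg (sq_nonneg _) (hb0 j)
    calc _ ≤ |θ| ^ 3 * M₀ := abs_im_centredExponent_le hb hb0 hM₀ θ
      _ ≤ T ^ 3 * M :=
          mul_le_mul (pow_le_pow_left₀ (abs_nonneg θ) hθ 3) hM₀M this (pow_nonneg hT.nonneg 3)
      _ ≤ 1 := hT.cube_mul_le
  · have : 0 ≤ D₀ := hD₀.nonneg fun j ↦ mul_nonneg j.cast_nonneg (abs_nonneg _)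
    calc _ ≤ 2 * θ ^ 2 * D₀ := norm_centredExponent_sub_le hb hb' hD₀ θ
      _ ≤ 2 * T ^ 2 * D := by
          rw [← sq_abs θ]
          gcongr
          exact abs_le.2 hθ
      _ ≤ η := hT.sq_mul_le

theorem FriableWeights.norm_integral_sub_le (h : FriableWeights Q m a) (hQ : 1 < Q)
    (hr : 0 < r) (hr1 : r < 1) (hm : 2 ≤ m) (hn : 0 < n) (hy : SaddleBounds Q r n m y)
    (hx : 0 < x) (hxn : ∑ j ∈ Finset.Icc 1 m, x ^ j = n) (hyn : HasSum (fun j ↦ a j * y ^ j) n)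
    (hη : η ≤ 1 / 4)
    (hT : IsCutoff (m * n) (m ^ 2 * n) (m * (16 / (1 - r) ^ 2 * (n ^ 2 / Q ^ m)))
      ((1 - r) / 2 / Q * n / m) η T) :
    ‖(∫ θ in (-π)..π, Complex.exp (centredExponent (fun j ↦ a j * y ^ j) θ)) -
        ∫ θ in (-π)..π, Complex.exp (centredExponent (fun j ↦ permWeight m j * x ^ j) θ)‖ ≤
      16 * η *
        ‖∫ θ in (-π)..π, Complex.exp (centredExponent (fun j ↦ permWeight m j * x ^ j) θ)‖ := by
  have hm1 : 1 ≤ m := by omega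
  have hyx : y ≤ x := h.le_of_sum_pow_eq hm1 hy.pos hyn hx hxn
  have hb (j : ℕ) : 0 ≤ permWeight m j * x ^ j := mul_nonneg (permWeight_nonneg m j) (by positivity)
  have hb' (j : ℕ) : 0 ≤ a j * y ^ j := mul_nonneg (h.nonneg j) (pow_nonneg hy.pos.le j)
  have hxj (j : ℕ) (_ : j ∈ Finset.Icc 1 m) : 0 ≤ x ^ j := pow_nonneg hx.le j
  have hjm (j : ℕ) (hj : j ∈ Finset.Icc 1 m) : (j : ℝ) ≤ m :=
    Nat.cast_le.2 (Finset.mem_Icc.1 hj).2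
  have hmom (c : ℕ → ℝ) : HasSum (fun j ↦ c j * (permWeight m j * x ^ j))
      (∑ j ∈ Finset.Icc 1 m, c j * x ^ j) := by
    simpa only [mul_left_comm] using hasSum_permWeight_mul m fun j ↦ c j * x ^ j
  obtain ⟨D, hD, hDle⟩ := h.exists_hasSum_mul_abs_sub hQ hr hr1 hm1 hy hyx hxn hyn
  have hK : 0 ≤ (1 - r) / 2 / Q * n :=
    mul_nonneg (div_nonneg (by linarith) (by linarith)) n.cast_nonneg
  refine norm_integral_exp_centredExponent_sub_le (hasSum_permWeight_mul m (x ^ ·)).summable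
    hyn.summable hb hb' (hmom fun j ↦ j) (sum_mul_le_mul_of_sum_eq hxj hjm hxn) (by positivity)
    (hmom fun j ↦ (j : ℝ) ^ 2)
    (sum_mul_le_mul_of_sum_eq hxj (fun j hj ↦ pow_le_pow_left₀ j.cast_nonneg (hjm j hj) 2) hxn)
    hD hDle hm hK (fun k hk ↦ ?_) hη hT
  have hKy := hy.mul_le_pow_of_eq_or hQ hr1 hk
  rw [permWeight_of_le (by omega) (by omega), h.eq_one (by omega) (by omega), one_mul, one_mul]
  exact ⟨hKy.trans (pow_le_pow_left₀ hy.pos.le hyx k), hKy⟩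

lemma eventually_mul_exp_neg_mul_rpow_le {s : ℝ} (hκ : 0 < κ) (hs : 0 < s) (hη : 0 < η) :
    ∀ᶠ n : ℕ in atTop, 2 * π * (n * Real.exp (-κ * (n : ℝ) ^ s)) ≤ η := by
  have hlim := ((tendsto_rpow_mul_exp_neg_mul_atTop_nhds_zero (1 / s) κ hκ).comp
    ((tendsto_rpow_atTop hs).comp tendsto_natCast_atTop_atTop)).const_mul (2 * π)
  rw [mul_zero] at hlim
  filter_upwards [hlim.eventually_le_const hη] with n hn
  simpa only [Function.comp_apply, ← Real.rpow_mul n.cast_nonneg, mul_one_div_cancel hs.ne',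
    Real.rpow_one] using hn

lemma rpow_pow_mul_self (hn : 0 < n) (s : ℝ) (k : ℕ) :
    ((n : ℝ) ^ s) ^ k * n = (n : ℝ) ^ (s * k + 1) := by
  rw [← Real.rpow_mul_natCast n.cast_nonneg, ← Real.rpow_add_one (by positivity)]

lemma rpow_cutoff_sq_mul (hn : 0 < n) :
    ((n : ℝ) ^ (-1 / 2 + ε / 4)) ^ 2 * n = (n : ℝ) ^ (ε / 2) := by
  rw [rpow_pow_mul_self hn]
  push_cast
  ring_nf

lemma FriableRange.rpow_cutoff_sq_mul_le (h : FriableRange Q ε n m) (hQ : 1 < Q) (hn : 0 < n)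
    (hA : 0 ≤ A) (hη : 0 < η) (hmA : 2 * A / η * m ≤ (n : ℝ) ^ (ε / 2)) :
    2 * ((n : ℝ) ^ (-1 / 2 + ε / 4)) ^ 2 * (m * (A * (n ^ 2 / Q ^ m))) ≤ η := by
  have hn0 : (0 : ℝ) < n := Nat.cast_pos.2 hn
  have hη2 : 2 * A * m ≤ η * (n : ℝ) ^ (ε / 2) := by
    rwa [div_mul_eq_mul_div, div_le_iff₀' hη] at hmA
  calc _ ≤ 2 * ((n : ℝ) ^ (-1 / 2 + ε / 4)) ^ 2 * (m * (A * (n : ℝ) ^ (1 - ε))) := by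
        gcongr
        exact h.sq_div_pow_le hQ hn
    _ = 2 * A * m * (((n : ℝ) ^ (-1 / 2 + ε / 4)) ^ 2 * n * (n : ℝ) ^ (-ε)) := by
        rw [Real.rpow_sub hn0, Real.rpow_one, Real.rpow_neg hn0.le]
        ring
    _ ≤ η * (n : ℝ) ^ (ε / 2) * (((n : ℝ) ^ (-1 / 2 + ε / 4)) ^ 2 * n * (n : ℝ) ^ (-ε)) := by
        gcongr
    _ = η * (n : ℝ) ^ (ε / 2 + ε / 2 + -ε) := by
        rw [rpow_cutoff_sq_mul hn, Real.rpow_add hn0, Real.rpow_add hn0]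
        ring
    _ = η := by rw [add_halves, add_neg_cancel, Real.rpow_zero, mul_one]

lemma exp_neg_rpow_cutoff_le (hn : 0 < n) (hm : 0 < m) (hκ : 0 ≤ κ) (hη : 0 ≤ η) (hmn : m ≤ n)
    (hmε : m ≤ (n : ℝ) ^ (ε / 4))
    (hexp : 2 * π * (n * Real.exp (-(κ / π ^ 2) * (n : ℝ) ^ (ε / 4))) ≤ η) :
    2 * π * Real.exp (-(κ * n / m * (((n : ℝ) ^ (-1 / 2 + ε / 4)) ^ 2 / π ^ 2))) ≤
      η * (√(m * n))⁻¹ := by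
  have hn0 : (0 : ℝ) < n := Nat.cast_pos.2 hn
  have hsqrt : √(m * n) ≤ n := by
    refine Real.sqrt_le_iff.2 ⟨hn0.le, ?_⟩
    rw [sq]
    gcongr
  have hrate : κ / π ^ 2 * (n : ℝ) ^ (ε / 4) ≤
      κ * n / m * (((n : ℝ) ^ (-1 / 2 + ε / 4)) ^ 2 / π ^ 2) := by
    calc _ ≤ κ / π ^ 2 * ((n : ℝ) ^ (ε / 2) / m) := by
          gcongr
          rw [le_div_iff₀ (by positivity), show ε / 2 = ε / 4 + ε / 4 by ring,
            Real.rpow_add hn0]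
          gcongr
      _ = _ := by
          rw [← rpow_cutoff_sq_mul hn]
          ring
  calc _ ≤ 2 * π * Real.exp (-(κ / π ^ 2) * (n : ℝ) ^ (ε / 4)) := by
        gcongr
        rw [neg_mul]
        exact neg_le_neg hrate
    _ ≤ η * (n : ℝ)⁻¹ := by
        rw [← div_eq_mul_inv, le_div_iff₀ hn0]
        linarith
    _ ≤ _ := by gcongr

lemma rpow_cutoff_cube_mul_le (hn : 1 ≤ n) (hε2 : ε < 1 / 2) (hmn : m ≤ (n : ℝ) ^ (1 / 16 : ℝ)) :
    ((n : ℝ) ^ (-1 / 2 + ε / 4)) ^ 3 * (m ^ 2 * n) ≤ 1 := by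
  have hn1 : (1 : ℝ) ≤ n := Nat.one_le_cast.2 hn
  have hn0 : (0 : ℝ) < n := by positivity
  calc _ = (n : ℝ) ^ ((-1 / 2 + ε / 4) * (3 : ℕ) + 1) * m ^ 2 := by
        rw [← rpow_pow_mul_self hn]
        ring
    _ ≤ (n : ℝ) ^ ((-1 / 2 + ε / 4) * (3 : ℕ) + 1) * ((n : ℝ) ^ (1 / 16 : ℝ)) ^ 2 := by gcongr
    _ = (n : ℝ) ^ ((-1 / 2 + ε / 4) * (3 : ℕ) + 1 + 1 / 16 * (2 : ℕ)) := by
        rw [← Real.rpow_mul_natCast hn0.le, ← Real.rpow_add hn0]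
    _ ≤ 1 := by
        apply Real.rpow_le_one_of_one_le_of_nonpos hn1
        push_cast
        linarith

theorem eventually_isCutoff (hQ : 1 < Q) (hε : 0 < ε) (hε2 : ε < 1 / 2) (hA : 0 ≤ A) (hκ : 0 < κ)
    (hη : 0 < η) :
    ∀ᶠ n : ℕ in atTop, ∀ m, FriableRange Q ε n m →
      IsCutoff (m * n) (m ^ 2 * n) (m * (A * (n ^ 2 / Q ^ m))) (κ * n / m) η
        ((n : ℝ) ^ (-1 / 2 + ε / 4)) := by
  filter_upwards [eventually_two_le_of_friableRange hQ hε,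
    eventually_mul_le_rpow_of_friableRange (A := 1) (s := 1 / 16) zero_le_one (by norm_num),
    eventually_mul_le_rpow_of_friableRange (A := 1) (s := ε / 4) zero_le_one (by positivity),
    eventually_mul_le_rpow_of_friableRange (A := 2 * A / η) (s := ε / 2) (by positivity)
      (by positivity),
    eventually_mul_exp_neg_mul_rpow_le (κ := κ / π ^ 2) (s := ε / 4) (by positivity)
      (by positivity) hη,
    eventually_ge_atTop 1] with n hm2 hm16 hmε hmA hexp hn m h
  specialize hm16 m h
  specialize hmε m h
  rw [one_mul] at hm16 hmε
  have hn1 : (1 : ℝ) ≤ n := Nat.one_le_cast.2 hn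
  have hm1 : 1 ≤ m := one_le_two.trans (hm2 m h)
  have hmn : m ≤ n := by
    exact_mod_cast hm16.trans (Real.rpow_le_self_of_one_le hn1 (by norm_num))
  refine ⟨by positivity, ?_, ?_, rpow_cutoff_cube_mul_le hn hε2 hm16,
    h.rpow_cutoff_sq_mul_le hQ hn hA hη (hmA m h),
    exp_neg_rpow_cutoff_le hn hm1 hκ.le hη.le hmn hmε hexp⟩
  · exact (Real.rpow_le_one_of_one_le_of_nonpos hn1 (by linarith)).trans (by linarith [pi_gt_three])
  · rw [mul_left_comm, rpow_cutoff_sq_mul hn]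
    exact one_le_mul_of_one_le_of_one_le (Nat.one_le_cast.2 hm1)
      (Real.one_le_rpow hn1 (by linarith))

end IntegralComparison

section Ratio

variable {F : Type} [Field F] [Fintype F] {x y ε η δ r : ℝ} {n m : ℕ}

lemma FqFun_pos (m : ℕ) (hy : |y| < Fintype.card F) : 0 < FqFun F m y := by
  rw [FqFun_eq_exp_tsum m hy]
  positivity

lemma Gq_pos (m : ℕ) (hy : |y| < Fintype.card F) : 0 < Gq F m y :=
  mul_pos (FqFun_pos m hy) (Real.exp_pos _)

lemma Gq_mul_exp_saddleDefect (hx : 0 < x) (hy : 0 < y)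
    (hxn : ∑ j ∈ Finset.Icc 1 m, x ^ j = n) :
    Gq F m y * Real.exp (saddleDefect m x y) * y ^ n =
      FqFun F m y * (Real.exp (∑ j ∈ Finset.Icc 1 m, x ^ j / j))⁻¹ * x ^ n := by
  rw [Gq, saddleDefect, hxn, Real.exp_add, Real.exp_sub, Real.exp_neg, Real.exp_nat_mul,
    Real.exp_log (div_pos hx hy), div_pow]
  field_simp

lemma two_pi_mul_polyProb_mul_pow_eq (hy : 0 < y) (hyq : y < Fintype.card F)
    (hyn : HasSum (fun j ↦ friableMangoldt F m j * y ^ j) n) :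
    ((2 * π * polyProb F n m * y ^ n : ℝ) : ℂ) = (FqFun F m y : ℝ) *
      ∫ θ in (-π)..π, Complex.exp (centredExponent (fun j ↦ friableMangoldt F m j * y ^ j) θ) := by
  rw [FqFun_eq_exp_tsum m (by rwa [abs_of_pos hy])]
  exact (isExpCoeff_polyProb m).two_pi_mul_mul_pow_eq (friableMangoldt_zero m) hy hyn

lemma two_pi_mul_permProb_mul_pow_eq (hm : 1 ≤ m) (hx : 0 < x)
    (hxn : ∑ j ∈ Finset.Icc 1 m, x ^ j = n) :
    ((2 * π * permProb n m * x ^ n : ℝ) : ℂ) = (Real.exp (∑ j ∈ Finset.Icc 1 m, x ^ j / j) : ℝ) *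
      ∫ θ in (-π)..π, Complex.exp (centredExponent (fun j ↦ permWeight m j * x ^ j) θ) := by
  have hsum := (hasSum_permWeight_mul m fun j ↦ x ^ j / j).tsum_eq
  simp only [← mul_div_assoc] at hsum
  rw [← hsum]
  exact (isExpCoeff_permProb hm).two_pi_mul_mul_pow_eq (by simp [permWeight]) hx
    (hxn ▸ hasSum_permWeight_mul m (x ^ ·))

theorem abs_polyProb_div_permProb_sub_le (hm : 1 ≤ m) (hx : 0 < x) (hy : 0 < y)
    (hyq : y < Fintype.card F) (hxn : ∑ j ∈ Finset.Icc 1 m, x ^ j = n)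
    (hyn : HasSum (fun j ↦ friableMangoldt F m j * y ^ j) n)
    (hint : ‖(∫ θ in (-π)..π,
          Complex.exp (centredExponent (fun j ↦ friableMangoldt F m j * y ^ j) θ)) -
        ∫ θ in (-π)..π, Complex.exp (centredExponent (fun j ↦ permWeight m j * x ^ j) θ)‖ ≤
      δ * ‖∫ θ in (-π)..π, Complex.exp (centredExponent (fun j ↦ permWeight m j * x ^ j) θ)‖) :
    |polyProb F n m / permProb n m - Gq F m y * Real.exp (saddleDefect m x y)| ≤
      δ * (Gq F m y * Real.exp (saddleDefect m x y)) := by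
  have hp := permProb_pos n m
  have hpoly := two_pi_mul_polyProb_mul_pow_eq hy hyq hyn
  have hperm := two_pi_mul_permProb_mul_pow_eq hm hx hxn
  have hR := Gq_mul_exp_saddleDefect (F := F) hx hy hxn
  have hyq' : |y| < Fintype.card F := by rwa [abs_of_pos hy]
  set I := ∫ θ in (-π)..π, Complex.exp (centredExponent (fun j ↦ permWeight m j * x ^ j) θ)
  set E := Real.exp (∑ j ∈ Finset.Icc 1 m, x ^ j / j)
  set R := Gq F m y * Real.exp (saddleDefect m x y)
  have hR0 : 0 < R := mul_pos (Gq_pos m hyq') (Real.exp_pos _)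
  have hRp : ((2 * π * (R * permProb n m) * y ^ n : ℝ) : ℂ) = (FqFun F m y : ℝ) * I := by
    have hE : (E : ℂ) ≠ 0 := Complex.ofReal_ne_zero.2 (Real.exp_ne_zero _)
    have : 2 * π * (R * permProb n m) * y ^ n =
        FqFun F m y * E⁻¹ * (2 * π * permProb n m * x ^ n) := by
      linear_combination 2 * π * permProb n m * hR
    rw [this, Complex.ofReal_mul, hperm]
    push_cast
    field_simp
  have hdiff : ‖((2 * π * y ^ n * (polyProb F n m - R * permProb n m) : ℝ) : ℂ)‖ ≤
      δ * ‖((2 * π * (R * permProb n m) * y ^ n : ℝ) : ℂ)‖ := by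
    have : ((2 * π * y ^ n * (polyProb F n m - R * permProb n m) : ℝ) : ℂ) =
        (2 * π * polyProb F n m * y ^ n : ℝ) - (2 * π * (R * permProb n m) * y ^ n : ℝ) := by
      push_cast
      ring
    rw [this, hpoly, hRp, ← mul_sub, norm_mul, norm_mul, mul_left_comm]
    exact mul_le_mul_of_nonneg_left hint (norm_nonneg _)
  rw [Complex.norm_real, Complex.norm_real, norm_mul (2 * π * y ^ n),
    Real.norm_of_nonneg (by positivity : 0 ≤ 2 * π * y ^ n),
    Real.norm_of_nonneg (by positivity : 0 ≤ 2 * π * (R * permProb n m) * y ^ n),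
    Real.norm_eq_abs] at hdiff
  have hquot : polyProb F n m / permProb n m - R =
      (polyProb F n m - R * permProb n m) / permProb n m := by field_simp
  rw [hquot, abs_div, abs_of_pos hp, div_le_iff₀ hp]
  refine le_of_mul_le_mul_left (hdiff.trans_eq ?_) (by positivity : 0 < 2 * π * y ^ n)
  ring

theorem FriableWeights.mul_le_saddleDefect {Q : ℝ} {a : ℕ → ℝ} (h : FriableWeights Q m a)
    (hQ : 0 < Q) (hr1 : r < 1) (hn : 0 < n) (hm : 1 ≤ m) (hy : SaddleBounds Q r n m y)
    (hyx : y ≤ x) (hxn : ∑ j ∈ Finset.Icc 1 m, x ^ j = n)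
    (hyn : HasSum (fun j ↦ a j * y ^ j) n) :
    ((1 - r) / 2) ^ 4 / 2 * n ^ 3 / (m * Q ^ (2 * m)) ≤ saddleDefect m x y := by
  have hr : 0 < 1 - r := sub_pos.2 hr1
  have hW : ((1 - r) / 2 * n) ^ 2 / Q ^ m ≤ n - ∑ j ∈ Finset.Icc 1 m, y ^ j := by
    refine le_trans ?_ (h.le_sub_sum_pow hm hy.pos hyn)
    rw [mul_comm 2 m, pow_mul]
    gcongr
    exact hy.mul_le_pow
  have hdefect := sq_sum_pow_sub_le_mul_saddleDefect (m := m) hy.pos hyx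
  rw [hxn] at hdefect
  calc _ = (((1 - r) / 2 * n) ^ 2 / Q ^ m) ^ 2 / (2 * m * n) := by
        rw [mul_comm 2 m, pow_mul]
        field_simp
    _ ≤ (n - ∑ j ∈ Finset.Icc 1 m, y ^ j) ^ 2 / (2 * m * n) := by gcongr
    _ ≤ _ := by rwa [div_le_iff₀' (by positivity)]

theorem FriableWeights.saddleDefect_le {Q : ℝ} {a : ℕ → ℝ} (h : FriableWeights Q m a)
    (hQ : 0 < Q) (hr : 0 < r) (hr1 : r < 1) (hn : 0 < n) (hm : 1 ≤ m)
    (hy : SaddleBounds Q r n m y) (hyx : y ≤ x) (hxn : ∑ j ∈ Finset.Icc 1 m, x ^ j = n)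
    (hyn : HasSum (fun j ↦ a j * y ^ j) n) :
    saddleDefect m x y ≤
      (8 / (1 - r) ^ 2) ^ 2 / ((1 - r) / 2) * n ^ 3 / (m * Q ^ (2 * m)) := by
  have hr' : 0 < 1 - r := sub_pos.2 hr1
  have hy0 := hy.pos
  have hW : n - ∑ j ∈ Finset.Icc 1 m, y ^ j ≤ 8 / (1 - r) ^ 2 * (n ^ 2 / Q ^ m) := by
    refine (h.sub_sum_pow_le hm hQ hy.pos hr hr1 hy.le_mul hy.sqrt_le_mul hyn).trans ?_
    gcongr _ * ?_
    exact div_le_div_of_nonneg_right hy.pow_two_mul_le (by positivity)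
  have hW0 : 0 ≤ n - ∑ j ∈ Finset.Icc 1 m, y ^ j :=
    le_trans (by positivity) (h.le_sub_sum_pow hm hy.pos hyn)
  refine (saddleDefect_le_sq_sum_pow_sub_div hm hy.pos hyx).trans ?_
  rw [hxn]
  calc _ ≤ (8 / (1 - r) ^ 2 * (n ^ 2 / Q ^ m)) ^ 2 / (m * ((1 - r) / 2 * n)) := by
        gcongr
        exact hy.mul_le_pow
    _ = _ := by
        rw [mul_comm 2 m, pow_mul]
        field_simp

theorem eventually_abs_polyProb_div_permProb_sub_le (hε : 0 < ε) (hε2 : ε < 1 / 2)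
    (hr : r = (Fintype.card F : ℝ) ^ (-ε / 8)) (hδ : 0 < δ) :
    ∀ᶠ n : ℕ in atTop, ∀ m, FriableRange (Fintype.card F) ε n m →
      ∀ y : ℝ, 0 < y → y < Fintype.card F → y * deriv (FqFun F m) y / FqFun F m y = n →
        ∃ Δ : ℝ, ((1 - r) / 2) ^ 4 / 2 * n ^ 3 / (m * (Fintype.card F : ℝ) ^ (2 * m)) ≤ Δ ∧
          Δ ≤ (8 / (1 - r) ^ 2) ^ 2 / ((1 - r) / 2) * n ^ 3 /
            (m * (Fintype.card F : ℝ) ^ (2 * m)) ∧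
          |polyProb F n m / permProb n m - Gq F m y * Real.exp Δ| ≤
            δ * (Gq F m y * Real.exp Δ) := by
  have hQ := one_lt_card_cast (F := F)
  have hr0 : 0 < r := hr ▸ Real.rpow_pos_of_pos card_cast_pos _
  have hr1 : r < 1 := hr ▸ rpow_neg_lt_one hQ hε
  have : 0 < 1 - r := sub_pos.2 hr1
  filter_upwards [eventually_two_le_of_friableRange hQ hε,
    eventually_saddleBounds hQ hε (by linarith),
    eventually_isCutoff (A := 16 / (1 - r) ^ 2) (κ := (1 - r) / 2 / Fintype.card F)
      (η := min (1 / 4) (δ / 16)) hQ hε hε2 (by positivity)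
      (div_pos (by positivity) card_cast_pos) (by positivity),
    eventually_gt_atTop 0] with n hm hbounds hcutoff hn m hnm y hy hyq hyn
  have hm1 : 1 ≤ m := one_le_two.trans (hm m hnm)
  have hweights := friableWeights_friableMangoldt (F := F) hm1
  have hsum := hasSum_friableMangoldt_mul_pow m (F := F) (z := y) (by rwa [abs_of_pos hy])
  rw [hyn] at hsum
  have hsaddle := hr ▸ hbounds m hnm _ y hweights hy hsum
  obtain ⟨x, hx, hxn⟩ := exists_sum_pow_eq hm1 (Nat.cast_pos.2 hn : (0 : ℝ) < n)
  have hyx := hweights.le_of_sum_pow_eq hm1 hy hsum hx hxn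
  refine ⟨saddleDefect m x y,
    hweights.mul_le_saddleDefect card_cast_pos hr1 hn hm1 hsaddle hyx hxn hsum,
    hweights.saddleDefect_le card_cast_pos hr0 hr1 hn hm1 hsaddle hyx hxn hsum,
    abs_polyProb_div_permProb_sub_le hm1 hx hy hyq hxn hsum ?_⟩
  refine (hweights.norm_integral_sub_le hQ hr0 hr1 (hm m hnm) hn hsaddle hx hxn hsum
    (min_le_left _ _) (hcutoff m hnm)).trans ?_
  gcongr
  linarith [min_le_right (1 / 4) (δ / 16)]

end Ratio

/-- Fix a prime power `q` (the cardinality of a finite field `F`) and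
`ε ∈ (0,1/2)`. There exist `c, C > 0` such that for every `δ > 0` there is `N` with:
for all `n ≥ N` and `(1+ε)·log_q n ≤ m ≤ (2−ε)·log_q n`, one has
`(1−δ)·G_q(x_q)·exp(c·n³/(m·q^{2m})) ≤ p_{n,m,q}/p_{n,m} ≤ (1+δ)·G_q(x_q)·exp(C·n³/(m·q^{2m}))`. -/
theorem stmt13 :
    ∀ (F : Type) [Field F] [Fintype F], ∀ ε : ℝ, 0 < ε → ε < 1 / 2 →
      ∃ c C : ℝ, 0 < c ∧ 0 < C ∧ ∀ δ : ℝ, 0 < δ → ∃ N : ℕ, ∀ n : ℕ, N ≤ n → ∀ m : ℕ,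
      (1 + ε) * Real.log n / Real.log (Fintype.card F) ≤ (m : ℝ) →
      (m : ℝ) ≤ (2 - ε) * Real.log n / Real.log (Fintype.card F) →
      ∀ xq : ℝ, 0 < xq → xq < (Fintype.card F : ℝ) →
      xq * deriv (FqFun F m) xq / FqFun F m xq = (n : ℝ) →
      (1 - δ) * Gq F m xq *
          Real.exp (c * (n : ℝ) ^ 3 / ((m : ℝ) * (Fintype.card F : ℝ) ^ (2 * m))) ≤
        polyProb F n m / permProb n m ∧
      polyProb F n m / permProb n m ≤
        (1 + δ) * Gq F m xq *
          Real.exp (C * (n : ℝ) ^ 3 / ((m : ℝ) * (Fintype.card F : ℝ) ^ (2 * m))) := by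
  intro F _ _ ε hε hε2
  have hr := rpow_neg_lt_one (one_lt_card_cast (F := F)) hε
  set r := (Fintype.card F : ℝ) ^ (-ε / 8) with hr_def
  have : 0 < 1 - r := sub_pos.2 hr
  refine ⟨((1 - r) / 2) ^ 4 / 2, (8 / (1 - r) ^ 2) ^ 2 / ((1 - r) / 2), by positivity,
    by positivity, fun δ hδ ↦ ?_⟩
  obtain ⟨N, hN⟩ := eventually_atTop.1 (eventually_abs_polyProb_div_permProb_sub_le
    hε hε2 hr_def (lt_min hδ one_pos))
  refine ⟨N, fun n hn m hge hle y hy hyq hyn ↦ ?_⟩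
  obtain ⟨Δ, hcΔ, hΔC, hratio⟩ := hN n hn m ⟨hge, hle⟩ y hy hyq hyn
  have hG := Gq_pos (F := F) m (by rwa [abs_of_pos hy])
  obtain ⟨hlower, hupper⟩ := abs_le.1 hratio
  have hδ1 : 0 ≤ 1 - min δ 1 := sub_nonneg.2 (min_le_right δ 1)
  constructor
  · calc _ ≤ (1 - min δ 1) * Gq F m y * Real.exp Δ := by
          gcongr
          exact min_le_left δ 1
      _ ≤ _ := by linarith
  · calc _ ≤ (1 + min δ 1) * Gq F m y * Real.exp Δ := by linarith
      _ ≤ _ := by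
          gcongr
          exact min_le_left δ 1
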